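/- Let Z=(X,Y) ∈ Ω₁ be such that all four eigenvalues λ₁⁺, λ₂⁺, λ₁⁻, λ₂⁻ are non-real (so Z ∈ Ω_ff), and let α = sign ℓ ∈ {−1,1}. Then Z is locally Σ-equivalent near the origin to the piecewise linear vector field Z_ff = (X_ff, Y_ff), where X_ff(x,y) = (αx − y, x + αy) and Y_ff(x,y) = (αx − y, x + αy). -/

import Mathlib

open Set Filter

noncomputable section

/-- Entry (1,1) of the Jacobian matrix of `X` at the origin. -/
noncomputable def jac11 (X : ℝ × ℝ → ℝ × ℝ) : ℝ := (fderiv ℝ X (0, 0) (1, 0)).1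
/-- Entry (1,2) of the Jacobian matrix of `X` at the origin. -/
noncomputable def jac12 (X : ℝ × ℝ → ℝ × ℝ) : ℝ := (fderiv ℝ X (0, 0) (0, 1)).1
/-- Entry (2,1) of the Jacobian matrix of `X` at the origin, i.e. `∂ₓX₂(0,0)`. -/
noncomputable def jac21 (X : ℝ × ℝ → ℝ × ℝ) : ℝ := (fderiv ℝ X (0, 0) (1, 0)).2
/-- Entry (2,2) of the Jacobian matrix of `X` at the origin. -/
noncomputable def jac22 (X : ℝ × ℝ → ℝ × ℝ) : ℝ := (fderiv ℝ X (0, 0) (0, 1)).2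

/-- Determinant of the Jacobian matrix of `X` at the origin. -/
noncomputable def detJ (X : ℝ × ℝ → ℝ × ℝ) : ℝ := jac11 X * jac22 X - jac12 X * jac21 X
/-- Trace of the Jacobian matrix of `X` at the origin. -/
noncomputable def trJ (X : ℝ × ℝ → ℝ × ℝ) : ℝ := jac11 X + jac22 X

/-- The first (complex) eigenvalue of the Jacobian matrix of `X` at the origin. -/
noncomputable def eig1 (X : ℝ × ℝ → ℝ × ℝ) : ℂ :=
  if 0 ≤ trJ X ^ 2 - 4 * detJ X then
    (((trJ X + Real.sqrt (trJ X ^ 2 - 4 * detJ X)) / 2 : ℝ) : ℂ)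
  else
    (((trJ X / 2 : ℝ) : ℂ) + (Real.sqrt (4 * detJ X - trJ X ^ 2) / 2 : ℝ) * Complex.I)

/-- The second (complex) eigenvalue of the Jacobian matrix of `X` at the origin. -/
noncomputable def eig2 (X : ℝ × ℝ → ℝ × ℝ) : ℂ :=
  if 0 ≤ trJ X ^ 2 - 4 * detJ X then
    (((trJ X - Real.sqrt (trJ X ^ 2 - 4 * detJ X)) / 2 : ℝ) : ℂ)
  else
    (((trJ X / 2 : ℝ) : ℂ) - (Real.sqrt (4 * detJ X - trJ X ^ 2) / 2 : ℝ) * Complex.I)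

/-- The quantity ℓ : `Re λ₁⁺/|Im λ₁⁺| + Re λ₁⁻/|Im λ₁⁻|` when both imaginary parts are
nonzero, and `1` otherwise. -/
noncomputable def ellVal (X Y : ℝ × ℝ → ℝ × ℝ) : ℝ :=
  if (eig1 X).im * (eig1 Y).im ≠ 0 then
    (eig1 X).re / |(eig1 X).im| + (eig1 Y).re / |(eig1 Y).im|
  else 1

/-- Membership in Ω₀ : `Z = (X, Y)` is a piecewise `C¹` vector field on the open set `U`
containing the origin, the origin is a zero of both `X` and `Y`, it is non-degenerate for
both, and `∂ₓX₂(0,0) ⬝ ∂ₓY₂(0,0) > 0`. -/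
def InOmega0 (U : Set (ℝ × ℝ)) (X Y : ℝ × ℝ → ℝ × ℝ) : Prop :=
  IsOpen U ∧ (0, 0) ∈ U ∧ ContDiffOn ℝ 1 X U ∧ ContDiffOn ℝ 1 Y U ∧
    X (0, 0) = (0, 0) ∧ Y (0, 0) = (0, 0) ∧ detJ X * detJ Y ≠ 0 ∧ jac21 X * jac21 Y > 0

/-- Membership in Ω₁ : member of Ω₀ with distinct eigenvalues of each Jacobian matrix
and `ℓ ≠ 0`. -/
def InOmega1 (U : Set (ℝ × ℝ)) (X Y : ℝ × ℝ → ℝ × ℝ) : Prop :=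
  InOmega0 U X Y ∧ eig1 X ≠ eig2 X ∧ eig1 Y ≠ eig2 Y ∧ ellVal X Y ≠ 0

/-- `γ` is a solution of `ẋ = X(x)` on the time set `I`. -/
def IsSolutionOn (X : ℝ × ℝ → ℝ × ℝ) (γ : ℝ → ℝ × ℝ) (I : Set ℝ) : Prop :=
  ∀ t ∈ I, HasDerivAt γ (X (γ t)) t

/-- `H` maps orbit arcs of `X` lying in `S` onto orbit arcs of `X'` lying in `S'`,
preserving the direction of time (via an increasing homeomorphism of time intervals). -/
def MapsOrbits (X X' : ℝ × ℝ → ℝ × ℝ) (H : ℝ × ℝ → ℝ × ℝ) (S S' : Set (ℝ × ℝ)) : Prop :=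
  ∀ (γ : ℝ → ℝ × ℝ) (I : Set ℝ), I.OrdConnected → IsSolutionOn X γ I →
    (∀ t ∈ I, γ t ∈ S) →
    ∃ (δ : ℝ → ℝ × ℝ) (J : Set ℝ) (τ : ℝ → ℝ),
      J.OrdConnected ∧ IsSolutionOn X' δ J ∧ (∀ s ∈ J, δ s ∈ S') ∧
      Set.BijOn τ I J ∧ StrictMonoOn τ I ∧ ContinuousOn τ I ∧
      ∀ t ∈ I, H (γ t) = δ (τ t)

/-- Local Σ-equivalence near the origin between the piecewise smooth vector fields
`Z = (X, Y)` and `Z' = (X', Y')`: a homeomorphism `H` between neighborhoods of the origin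
fixing the origin, preserving the switching line `{y = 0}`, and mapping orbit arcs of `X`
(resp. `Y`) in `{y ≥ 0}` (resp. `{y ≤ 0}`) onto orbit arcs of `X'` (resp. `Y'`),
preserving the direction of time, and conversely. -/
def LocalSigmaEquiv (X Y X' Y' : ℝ × ℝ → ℝ × ℝ) : Prop :=
  ∃ (U₀ V₀ : Set (ℝ × ℝ)) (H Hinv : ℝ × ℝ → ℝ × ℝ),
    U₀ ∈ nhds ((0, 0) : ℝ × ℝ) ∧ V₀ ∈ nhds ((0, 0) : ℝ × ℝ) ∧
    ContinuousOn H U₀ ∧ ContinuousOn Hinv V₀ ∧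
    Set.BijOn H U₀ V₀ ∧
    (∀ p ∈ U₀, Hinv (H p) = p) ∧ (∀ q ∈ V₀, H (Hinv q) = q) ∧
    H (0, 0) = (0, 0) ∧
    H '' (U₀ ∩ {p : ℝ × ℝ | p.2 = 0}) = V₀ ∩ {p : ℝ × ℝ | p.2 = 0} ∧
    MapsOrbits X X' H (U₀ ∩ {p : ℝ × ℝ | 0 ≤ p.2}) (V₀ ∩ {p : ℝ × ℝ | 0 ≤ p.2}) ∧
    MapsOrbits Y Y' H (U₀ ∩ {p : ℝ × ℝ | p.2 ≤ 0}) (V₀ ∩ {p : ℝ × ℝ | p.2 ≤ 0}) ∧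
    MapsOrbits X' X Hinv (V₀ ∩ {p : ℝ × ℝ | 0 ≤ p.2}) (U₀ ∩ {p : ℝ × ℝ | 0 ≤ p.2}) ∧
    MapsOrbits Y' Y Hinv (V₀ ∩ {p : ℝ × ℝ | p.2 ≤ 0}) (U₀ ∩ {p : ℝ × ℝ | p.2 ≤ 0})


/-! ### Part 1: scalar ODE -/

lemma gron_le {E : Type*} [NormedAddCommGroup E] [NormedSpace ℝ E] (u u' : ℝ → E) (I : Set ℝ)
    (hI : I.OrdConnected) (K : ℝ) (hu : ∀ t ∈ I, HasDerivAt u (u' t) t)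
    (hK : ∀ t ∈ I, ‖u' t‖ ≤ K * ‖u t‖) {a b : ℝ} (ha : a ∈ I) (hb : b ∈ I) (hab : a ≤ b) :
    ‖u b‖ ≤ ‖u a‖ * Real.exp (K * (b - a)) := by
  have hsub : Icc a b ⊆ I := hI.out ha hb
  have := norm_le_gronwallBound_of_norm_deriv_right_le (f := u) (f' := u') (δ := ‖u a‖) (K := K)
    (ε := 0) (a := a) (b := b)
    (fun t ht => (hu t (hsub ht)).continuousAt.continuousWithinAt)
    (fun t ht => (hu t (hsub (Ico_subset_Icc_self ht))).hasDerivWithinAt) le_rfl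
    (fun t ht => by simpa using hK t (hsub (Ico_subset_Icc_self ht))) b (right_mem_Icc.2 hab)
  simpa [gronwallBound_ε0] using this

lemma gron_abs {E : Type*} [NormedAddCommGroup E] [NormedSpace ℝ E] (u u' : ℝ → E) (I : Set ℝ)
    (hI : I.OrdConnected) (K : ℝ) (hu : ∀ t ∈ I, HasDerivAt u (u' t) t)
    (hK : ∀ t ∈ I, ‖u' t‖ ≤ K * ‖u t‖) {a b : ℝ} (ha : a ∈ I) (hb : b ∈ I) :
    ‖u b‖ ≤ ‖u a‖ * Real.exp (K * |b - a|) := by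
  rcases le_total a b with hab | hab
  · rw [abs_of_nonneg (by linarith)]
    exact gron_le u u' I hI K hu hK ha hb hab
  · rw [abs_of_nonpos (by linarith)]
    have := gron_le (fun t => u (-t)) (fun t => - u' (-t)) (Neg.neg ⁻¹' I)
      (by
        constructor
        intro x hx y hy z hz
        exact hI.out hy hx ⟨by linarith [hz.2], by linarith [hz.1]⟩) K
      (fun t ht => by
        have := (hu (-t) ht).scomp t (hasDerivAt_neg t)
        simpa [Function.comp_def] using this)
      (fun t ht => by simpa using hK (-t) ht) (a := -a) (b := -b) (by simpa using ha)
      (by simpa using hb) (by linarith)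
    simpa [neg_add_eq_sub] using this

lemma gron_zero {E : Type*} [NormedAddCommGroup E] [NormedSpace ℝ E] (u u' : ℝ → E) (I : Set ℝ)
    (hI : I.OrdConnected) (K : ℝ) (hu : ∀ t ∈ I, HasDerivAt u (u' t) t)
    (hK : ∀ t ∈ I, ‖u' t‖ ≤ K * ‖u t‖) {a b : ℝ} (ha : a ∈ I) (hb : b ∈ I) (h0 : u a = 0) :
    u b = 0 := by
  have := gron_abs u u' I hI K hu hK ha hb
  rw [h0] at this
  simpa using this

lemma ode_gron {g : ℝ → ℝ → ℝ} {K : ℝ} (hL : ∀ θ s s', |g θ s - g θ s'| ≤ K * |s - s'|)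
    {I : Set ℝ} (hI : I.OrdConnected) {f₁ f₂ : ℝ → ℝ}
    (h₁ : ∀ t ∈ I, HasDerivAt f₁ (g t (f₁ t)) t) (h₂ : ∀ t ∈ I, HasDerivAt f₂ (g t (f₂ t)) t)
    {a b : ℝ} (ha : a ∈ I) (hb : b ∈ I) :
    |f₁ b - f₂ b| ≤ |f₁ a - f₂ a| * Real.exp (K * |b - a|) := by
  have := gron_abs (fun t => f₁ t - f₂ t) (fun t => g t (f₁ t) - g t (f₂ t)) I hI K
    (fun t ht => (h₁ t ht).sub (h₂ t ht)) (fun t _ => hL t _ _) ha hb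
  simpa using this

lemma ode_exists_Icc {g : ℝ → ℝ → ℝ} {K B : ℝ} (hK : 0 ≤ K)
    (hc : Continuous (Function.uncurry g))
    (hL : ∀ θ s s', |g θ s - g θ s'| ≤ K * |s - s'|) (hB : ∀ θ s, |g θ s| ≤ B)
    (t₀ x₀ T : ℝ) (hT : 0 < T) :
    ∃ f : ℝ → ℝ, f t₀ = x₀ ∧ ∀ t ∈ Ioo (t₀ - T) (t₀ + T), HasDerivAt f (g t (f t)) t := by
  have hB0 : 0 ≤ B := (abs_nonneg _).trans (hB 0 0)
  have ht₀ : t₀ ∈ Icc (t₀ - T) (t₀ + T) := ⟨by linarith, by linarith⟩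
  have hpl : IsPicardLindelof g (⟨t₀, ht₀⟩ : Icc (t₀ - T) (t₀ + T)) x₀
      (⟨B * T, by positivity⟩) 0 ⟨B, hB0⟩ ⟨K, hK⟩ := by
    refine ⟨fun t _ => ?_, fun x _ => ?_, fun t _ x _ => ?_, ?_⟩
    · apply LipschitzWith.lipschitzOnWith
      exact LipschitzWith.of_dist_le_mul fun x y => hL t x y
    · exact (hc.comp (continuous_id.prodMk continuous_const)).continuousOn
    · exact hB t x
    · simp
      exact le_rfl
  obtain ⟨f, h0, h⟩ := hpl.exists_eq_forall_mem_Icc_hasDerivWithinAt₀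
  exact ⟨f, h0, fun t ht => (h t (Ioo_subset_Icc_self ht)).hasDerivAt (Icc_mem_nhds ht.1 ht.2)⟩

lemma ode_exists {g : ℝ → ℝ → ℝ} {K B : ℝ} (hK : 0 ≤ K)
    (hc : Continuous (Function.uncurry g))
    (hL : ∀ θ s s', |g θ s - g θ s'| ≤ K * |s - s'|) (hB : ∀ θ s, |g θ s| ≤ B)
    (t₀ x₀ : ℝ) :
    ∃ f : ℝ → ℝ, f t₀ = x₀ ∧ ∀ t, HasDerivAt f (g t (f t)) t := by
  choose f hf0 hf using fun n : ℕ =>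
    ode_exists_Icc hK hc hL hB t₀ x₀ ((n : ℝ) + 1) (by positivity)
  have key : ∀ (m n : ℕ) (t : ℝ), |t - t₀| < m + 1 → |t - t₀| < n + 1 → f m t = f n t := by
    intro m n t hm hn
    have hI : (Ioo (t₀ - (min (m + 1 : ℝ) (n + 1))) (t₀ + (min (m + 1 : ℝ) (n + 1)))).OrdConnected :=
      ordConnected_Ioo
    have hpos : (0 : ℝ) < min (m + 1 : ℝ) (n + 1) := by positivity
    have hlt : |t - t₀| < min (m + 1 : ℝ) (n + 1) := lt_min hm hn
    rw [abs_lt] at hlt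
    have hl := min_le_left (m + 1 : ℝ) (n + 1)
    have hr := min_le_right (m + 1 : ℝ) (n + 1)
    have := ode_gron hL hI (f₁ := f m) (f₂ := f n) (a := t₀) (b := t)
      (fun t ht => hf m t ⟨by linarith [ht.1], by linarith [ht.2]⟩)
      (fun t ht => hf n t ⟨by linarith [ht.1], by linarith [ht.2]⟩)
      ⟨by linarith, by linarith⟩ ⟨by linarith [hlt.1], by linarith [hlt.2]⟩
    rw [hf0, hf0] at this
    simp only [sub_self, abs_zero, zero_mul, abs_nonpos_iff] at this
    linarith
  refine ⟨fun t => f ⌈|t - t₀|⌉₊ t, ?_, fun t => ?_⟩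
  · exact hf0 _
  · set n : ℕ := ⌈|t - t₀|⌉₊ with hn
    have hnt : |t - t₀| < n + 1 := lt_of_le_of_lt (Nat.le_ceil _) (by linarith)
    have hev : (fun t => f ⌈|t - t₀|⌉₊ t) =ᶠ[nhds t] f n := by
      have : ∀ᶠ u in nhds t, |u - t₀| < n + 1 :=
        (continuous_abs.comp (continuous_id.sub continuous_const)).continuousAt.eventually_lt
          continuousAt_const hnt
      filter_upwards [this] with u hu
      exact key _ _ u (lt_of_le_of_lt (Nat.le_ceil _) (by linarith)) hu
    rw [abs_lt] at hnt
    exact (hf n t ⟨by linarith, by linarith⟩).congr_of_eventuallyEq hev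

/-- Global flow of a scalar nonautonomous ODE. -/
lemma ode_flow {g : ℝ → ℝ → ℝ} {K B : ℝ} (hK : 0 ≤ K)
    (hc : Continuous (Function.uncurry g))
    (hL : ∀ θ s s', |g θ s - g θ s'| ≤ K * |s - s'|) (hB : ∀ θ s, |g θ s| ≤ B) :
    ∃ S R : ℝ → ℝ → ℝ, (∀ σ, S 0 σ = σ) ∧
      (∀ σ θ, HasDerivAt (fun θ => S θ σ) (g θ (S θ σ)) θ) ∧
      Continuous (Function.uncurry S) ∧ Continuous (Function.uncurry R) ∧
      (∀ θ σ, R θ (S θ σ) = σ) ∧ (∀ θ s, S θ (R θ s) = s) ∧ (∀ θ, StrictMono (S θ)) := by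
  choose f hf0 hf using fun t₀ x₀ => ode_exists hK hc hL hB t₀ x₀
  have G : ∀ (f₁ f₂ : ℝ → ℝ) (_ : ∀ t, HasDerivAt f₁ (g t (f₁ t)) t)
      (_ : ∀ t, HasDerivAt f₂ (g t (f₂ t)) t) (a b : ℝ),
      |f₁ b - f₂ b| ≤ |f₁ a - f₂ a| * Real.exp (K * |b - a|) := fun f₁ f₂ h₁ h₂ a b =>
    ode_gron hL ordConnected_univ (fun t _ => h₁ t) (fun t _ => h₂ t) (mem_univ a) (mem_univ b)
  have Q : ∀ (f₁ f₂ : ℝ → ℝ) (_ : ∀ t, HasDerivAt f₁ (g t (f₁ t)) t)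
      (_ : ∀ t, HasDerivAt f₂ (g t (f₂ t)) t) (a b : ℝ), f₁ a = f₂ a → f₁ b = f₂ b := by
    intro f₁ f₂ h₁ h₂ a b hab
    have := G f₁ f₂ h₁ h₂ a b
    rw [hab] at this
    simp only [sub_self, abs_zero, zero_mul, abs_nonpos_iff] at this
    linarith
  have hRS : ∀ θ σ, f θ (f 0 σ θ) 0 = σ := fun θ σ => by
    rw [Q (f θ (f 0 σ θ)) (f 0 σ) (hf _ _) (hf _ _) θ 0 (hf0 _ _), hf0]
  have hSR : ∀ θ s, f 0 (f θ s 0) θ = s := fun θ s => by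
    rw [Q (f 0 (f θ s 0)) (f θ s) (hf _ _) (hf _ _) 0 θ (hf0 _ _), hf0]
  have hcont : ∀ t₀ x₀, Continuous (f t₀ x₀) := fun t₀ x₀ =>
    continuous_iff_continuousAt.2 fun t => (hf t₀ x₀ t).continuousAt
  refine ⟨fun θ σ => f 0 σ θ, fun θ s => f θ s 0, fun σ => hf0 _ _, fun σ θ => hf _ _ _,
    ?_, ?_, hRS, hSR, ?_⟩
  · rw [continuous_iff_continuousAt]
    rintro ⟨θ₀, σ₀⟩
    rw [ContinuousAt, tendsto_iff_dist_tendsto_zero]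
    have hlim : Tendsto (fun p : ℝ × ℝ => |p.2 - σ₀| * Real.exp (K * |p.1 - 0|)
        + |f 0 σ₀ p.1 - f 0 σ₀ θ₀|) (nhds (θ₀, σ₀)) (nhds 0) := by
      have hco : Continuous (fun p : ℝ × ℝ => |p.2 - σ₀| * Real.exp (K * |p.1 - 0|)
        + |f 0 σ₀ p.1 - f 0 σ₀ θ₀|) := by
        have := (hcont 0 σ₀).comp (continuous_fst (X := ℝ) (Y := ℝ))
        simp only [Function.comp_def] at this
        fun_prop
      have := hco.tendsto (θ₀, σ₀)
      simpa using this
    refine squeeze_zero (fun _ => dist_nonneg) (fun p => ?_) hlim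
    simp only [Function.uncurry, Real.dist_eq]
    have h1 := G (f 0 p.2) (f 0 σ₀) (hf _ _) (hf _ _) 0 p.1
    rw [hf0, hf0] at h1
    calc |f 0 p.2 p.1 - f 0 σ₀ θ₀| ≤ |f 0 p.2 p.1 - f 0 σ₀ p.1| + |f 0 σ₀ p.1 - f 0 σ₀ θ₀| :=
          abs_sub_le _ _ _
      _ ≤ _ := by linarith
  · rw [continuous_iff_continuousAt]
    rintro ⟨θ₀, s₀⟩
    rw [ContinuousAt, tendsto_iff_dist_tendsto_zero]
    have hlim : Tendsto (fun p : ℝ × ℝ => |p.2 - f θ₀ s₀ p.1| * Real.exp (K * |0 - p.1|))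
        (nhds (θ₀, s₀)) (nhds 0) := by
      have hco : Continuous (fun p : ℝ × ℝ => |p.2 - f θ₀ s₀ p.1| * Real.exp (K * |0 - p.1|)) := by
        have := (hcont θ₀ s₀).comp (continuous_fst (X := ℝ) (Y := ℝ))
        simp only [Function.comp_def] at this
        fun_prop
      have := hco.tendsto (θ₀, s₀)
      simpa [hf0] using this
    refine squeeze_zero (fun _ => dist_nonneg) (fun p => ?_) hlim
    simp only [Function.uncurry, Real.dist_eq]
    have h1 := G (f p.1 p.2) (f θ₀ s₀) (hf _ _) (hf _ _) p.1 0
    rwa [hf0] at h1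
  · intro θ σ σ' hlt
    by_contra! hcon
    have hcon : f 0 σ' θ ≤ f 0 σ θ := hcon
    have hd : Continuous (fun t => f 0 σ' t - f 0 σ t) := (hcont _ _).sub (hcont _ _)
    have hmem : (0 : ℝ) ∈ uIcc (f 0 σ' θ - f 0 σ θ) (f 0 σ' 0 - f 0 σ 0) := by
      rw [hf0, hf0]
      exact mem_uIcc_of_le (by linarith) (by linarith)
    obtain ⟨t, -, ht⟩ := intermediate_value_uIcc (hd.continuousOn (s := uIcc θ 0)) hmem
    have ht : f 0 σ' t - f 0 σ t = 0 := ht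
    have := Q (f 0 σ') (f 0 σ) (hf _ _) (hf _ _) t 0 (by linarith)
    rw [hf0, hf0] at this
    linarith

/-! ### Part 2: conjugating an increasing homeomorphism to a translation, and time changes -/

lemma exists_conj_translation_pos (P : ℝ ≃o ℝ) {c : ℝ} (hc : 0 < c) (hP : ∀ s, s + c ≤ P s) :
    ∃ k : ℝ ≃o ℝ, ∀ t, k (t + 1) = P (k t) := by
  let a : ℤ → ℝ := fun n => (P ^ n) 0
  have hsucc : ∀ (n : ℤ) (x : ℝ), (P ^ (n + 1)) x = P ((P ^ n) x) := fun n x => by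
    rw [add_comm, zpow_add, zpow_one]; rfl
  have hsucc' : ∀ (n : ℤ) (x : ℝ), (P ^ (n + 1)) x = (P ^ n) (P x) := fun n x => by
    rw [zpow_add, zpow_one]; rfl
  have ha1 : ∀ n, a n + c ≤ a (n + 1) := fun n => by
    simp only [a]; rw [hsucc]; exact hP _
  have hmono : StrictMono a := strictMono_int_of_lt_succ fun n => by linarith [ha1 n]
  have hP0 : 0 < P 0 := by linarith [hP 0]
  have hfr : ∀ t : ℝ, 0 ≤ P 0 * Int.fract t ∧ P 0 * Int.fract t < P 0 := fun t =>
    ⟨mul_nonneg hP0.le (Int.fract_nonneg t), by nlinarith [Int.fract_lt_one t]⟩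
  let k : ℝ → ℝ := fun t => (P ^ ⌊t⌋) (P 0 * Int.fract t)
  have hk1 : ∀ t, a ⌊t⌋ ≤ k t := fun t => (P ^ ⌊t⌋).monotone (hfr t).1
  have hk2 : ∀ t, k t < a (⌊t⌋ + 1) := fun t => by
    simp only [a]; rw [hsucc']; exact (P ^ ⌊t⌋).strictMono (hfr t).2
  have hkm : StrictMono k := by
    intro t u htu
    rcases (Int.floor_mono htu.le).lt_or_eq with h | h
    · exact (hk2 t).trans_le ((hmono.monotone (by omega)).trans (hk1 u))
    · have : Int.fract t < Int.fract u := by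
        simp only [Int.fract]; rw [h]; linarith
      simp only [k]; rw [h]
      exact (P ^ ⌊u⌋).strictMono (by nlinarith)
  have hlow : ∀ n : ℕ, n * c ≤ a n := fun n => by
    induction n with
    | zero => simp [a]
    | succ n ih => have := ha1 n; push_cast; linarith
  have hupp : ∀ n : ℕ, a (-(n : ℤ)) ≤ - (n * c) := fun n => by
    induction n with
    | zero => simp [a]
    | succ n ih =>
      have := ha1 (-((n + 1 : ℕ) : ℤ))
      rw [show (-((n + 1 : ℕ) : ℤ)) + 1 = -(n : ℤ) by push_cast; ring] at this
      push_cast at this ih ⊢; linarith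
  have hsurj : Function.Surjective k := by
    intro s
    obtain ⟨N, hN⟩ := exists_nat_gt (|s| / c)
    have hN' : |s| < N * c := by rwa [div_lt_iff₀ hc] at hN
    obtain ⟨n, hn1, hn2⟩ : ∃ n : ℤ, a n ≤ s ∧ ∀ z : ℤ, a z ≤ s → z ≤ n := by
      refine Int.exists_greatest_of_bdd ⟨N, fun z hz => ?_⟩ ⟨-(N : ℤ), ?_⟩
      · by_contra! hlt
        have := hmono hlt
        linarith [hlow N, le_abs_self s]
      · linarith [hupp N, neg_abs_le s]
    have hn3 : s < a (n + 1) := by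
      by_contra! h
      have := hn2 _ h
      omega
    set x := (P ^ n).symm s with hx
    have hxs : (P ^ n) x = s := (P ^ n).apply_symm_apply s
    have hx0 : 0 ≤ x := (P ^ n).le_iff_le.1 (by rw [hxs]; exact hn1)
    have hx1 : x < P 0 := (P ^ n).lt_iff_lt.1 (by rw [hxs, ← hsucc']; exact hn3)
    have hq0 : 0 ≤ x / P 0 := by positivity
    have hq1 : x / P 0 < 1 := by rwa [div_lt_one hP0]
    have hfl : ⌊(n : ℝ) + x / P 0⌋ = n := by
      rw [Int.floor_eq_iff]; constructor <;> linarith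
    refine ⟨n + x / P 0, ?_⟩
    simp only [k, Int.fract]
    rw [hfl, add_sub_cancel_left, mul_div_cancel₀ _ hP0.ne', hxs]
  refine ⟨hkm.orderIsoOfSurjective k hsurj, fun t => ?_⟩
  simp only [StrictMono.coe_orderIsoOfSurjective, k, Int.floor_add_one, Int.fract_add_one]
  rw [hsucc]

/-- If `P` has displacement bounded away from zero, of the sign of `α`, then `P` is conjugate to
the translation by `2πα`. -/
lemma exists_conj_translation (P : ℝ ≃o ℝ) {c α : ℝ} (hc : 0 < c)
    (hP : (α = 1 ∧ ∀ s, s + c ≤ P s) ∨ (α = -1 ∧ ∀ s, P s ≤ s - c)) :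
    ∃ h : ℝ ≃o ℝ, ∀ s, h (P s) = h s + 2 * Real.pi * α := by
  have hpi : 0 < 2 * Real.pi := by positivity
  rcases hP with ⟨rfl, hP⟩ | ⟨rfl, hP⟩
  · obtain ⟨k, hk⟩ := exists_conj_translation_pos P hc hP
    refine ⟨k.symm.trans (OrderIso.mulLeft₀ (2 * Real.pi) hpi), fun s => ?_⟩
    have := hk (k.symm s)
    rw [OrderIso.apply_symm_apply] at this
    simp only [OrderIso.trans_apply, OrderIso.mulLeft₀_apply]
    rw [← this, OrderIso.symm_apply_apply]; ring
  · obtain ⟨k, hk⟩ := exists_conj_translation_pos P.symm hc (fun s => by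
      have := hP (P.symm s)
      rw [OrderIso.apply_symm_apply] at this
      linarith)
    refine ⟨k.symm.trans (OrderIso.mulLeft₀ (2 * Real.pi) hpi), fun s => ?_⟩
    have := hk (k.symm (P s))
    rw [OrderIso.apply_symm_apply, OrderIso.symm_apply_apply] at this
    simp only [OrderIso.trans_apply, OrderIso.mulLeft₀_apply]
    have h2 := congrArg k.symm this
    rw [OrderIso.symm_apply_apply] at h2
    rw [← h2]; ring

/-- Time change with derivative `1 / f`. -/
lemma exists_time_change {f : ℝ → ℝ} (hf : Continuous f) {m M : ℝ} (hm : 0 < m)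
    (h1 : ∀ x, m ≤ f x) (h2 : ∀ x, f x ≤ M) :
    ∃ T Ti : ℝ → ℝ, StrictMono T ∧ Continuous T ∧ (∀ x, Ti (T x) = x) ∧
      ∀ u, HasDerivAt Ti (f (Ti u)) u := by
  have hpos : ∀ x, 0 < f x := fun x => hm.trans_le (h1 x)
  have hM : 0 < M := (hpos 0).trans_le (h2 0)
  have hcinv : Continuous (fun x => (f x)⁻¹) := hf.inv₀ fun x => (hpos x).ne'
  let T : ℝ → ℝ := fun x => ∫ y in (0 : ℝ)..x, (f y)⁻¹
  have hT : ∀ x, HasDerivAt T (f x)⁻¹ x := fun x =>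
    (hcinv.integral_hasStrictDerivAt 0 x).hasDerivAt
  have hTc : Continuous T := continuous_iff_continuousAt.2 fun x => (hT x).continuousAt
  have hmono : StrictMono T := strictMono_of_hasDerivAt_pos hT fun x => inv_pos.2 (hpos x)
  have hmono2 : Monotone (fun x => T x - M⁻¹ * x) := by
    refine monotone_of_hasDerivAt_nonneg (f' := fun x => (f x)⁻¹ - M⁻¹) (fun x => ?_) fun x => ?_
    · simpa using (hT x).fun_sub ((hasDerivAt_id x).const_mul M⁻¹)
    · exact sub_nonneg.2 (inv_anti₀ (hpos x) (h2 x))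
  have hT0 : T 0 = 0 := by simp [T]
  have hMi : 0 < M⁻¹ := inv_pos.2 hM
  have hsurj : Function.Surjective T := by
    refine hTc.surjective ?_ ?_
    · refine tendsto_atTop_mono' _ ?_ ((tendsto_id (α := ℝ)).const_mul_atTop hMi)
      filter_upwards [eventually_ge_atTop 0] with x hx
      have := hmono2 hx
      simp only [hT0, mul_zero, sub_zero] at this
      simp only [id]; linarith
    · refine tendsto_atBot_mono' _ ?_ ((tendsto_id (α := ℝ)).const_mul_atBot hMi)
      filter_upwards [eventually_le_atBot 0] with x hx
      have := hmono2 hx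
      simp only [hT0, mul_zero, sub_zero] at this
      simp only [id]; linarith
  let e := hmono.orderIsoOfSurjective T hsurj
  have he : ∀ u, T (e.symm u) = u := fun u => e.apply_symm_apply u
  refine ⟨T, e.symm, hmono, hTc, fun x => e.symm_apply_apply x, fun u => ?_⟩
  have := HasDerivAt.of_local_left_inverse (f := T) (g := e.symm) (f' := (f (e.symm u))⁻¹) (a := u)
    e.symm.continuous.continuousAt (hT _) (inv_pos.2 (hpos _)).ne' (Eventually.of_forall he)
  simpa using this

/-! ### Part 3: logarithmic coordinates on the closed upper half plane -/

/-- Branch of the logarithm that is smooth near the closed upper half plane minus the origin. -/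
def Lg (z : ℂ) : ℂ := Complex.log (-Complex.I * z) + (Real.pi / 2 : ℝ) * Complex.I

lemma exp_half_pi_I : Complex.exp ((Real.pi / 2 : ℝ) * Complex.I) = Complex.I := by
  push_cast; exact Complex.exp_pi_div_two_mul_I

lemma exp_Lg {z : ℂ} (hz : z ≠ 0) : Complex.exp (Lg z) = z := by
  unfold Lg
  rw [Complex.exp_add, exp_half_pi_I, Complex.exp_log (by simp [hz])]
  linear_combination (-z) * Complex.I_mul_I

lemma Lg_exp {w : ℂ} (h0 : 0 ≤ w.im) (h1 : w.im ≤ Real.pi) : Lg (Complex.exp w) = w := by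
  unfold Lg
  have : -Complex.I * Complex.exp w = Complex.exp (w - (Real.pi / 2 : ℝ) * Complex.I) := by
    rw [Complex.exp_sub, exp_half_pi_I, Complex.div_I]; ring
  have hp := Real.pi_pos
  rw [this, Complex.log_exp]
  · ring
  · simp; linarith
  · simp; linarith

lemma mem_slit {z : ℂ} (hz : z ≠ 0) (hi : 0 ≤ z.im) : -Complex.I * z ∈ Complex.slitPlane := by
  rw [Complex.mem_slitPlane_iff]
  simp only [neg_mul, Complex.neg_re, Complex.neg_im, Complex.I_mul_re, Complex.I_mul_im, neg_neg]
  rcases hi.lt_or_eq with h | h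
  · exact Or.inl h
  · right
    intro h2
    exact hz (Complex.ext (by simpa using h2) h.symm)

lemma hasDerivAt_Lg {z : ℂ} (hz : z ≠ 0) (hi : 0 ≤ z.im) : HasDerivAt Lg z⁻¹ z := by
  unfold Lg
  have h1 : HasDerivAt (fun z : ℂ => -Complex.I * z) (-Complex.I) z := by
    simpa using (hasDerivAt_id z).const_mul (-Complex.I)
  have h2 := (h1.clog (mem_slit hz hi)).add_const ((Real.pi / 2 : ℝ) * Complex.I)
  rwa [div_mul_cancel_left₀ (by simp)] at h2

lemma Lg_im_mem {z : ℂ} (hi : 0 ≤ z.im) : 0 ≤ (Lg z).im ∧ (Lg z).im ≤ Real.pi := by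
  have h : |(-Complex.I * z).arg| ≤ Real.pi / 2 := by
    rw [Complex.abs_arg_le_pi_div_two_iff]; simpa using hi
  rw [abs_le] at h
  have : (Lg z).im = (-Complex.I * z).arg + Real.pi / 2 := by
    simp [Lg, Complex.log_im]
  rw [this]
  constructor <;> linarith

lemma Lg_re (z : ℂ) : (Lg z).re = Real.log ‖z‖ := by
  simp [Lg, Complex.log_re]

/-- Map given in logarithmic coordinates by `(s, θ) ↦ (k θ s, θ)`. -/
def pol (k : ℝ → ℝ → ℝ) (z : ℂ) : ℂ :=
  if z = 0 then 0 else Complex.exp (k (Lg z).im (Lg z).re + (Lg z).im * Complex.I)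

lemma pol_zero (k : ℝ → ℝ → ℝ) : pol k 0 = 0 := by simp [pol]

lemma pol_exp (k : ℝ → ℝ → ℝ) {s θ : ℝ} (h0 : 0 ≤ θ) (h1 : θ ≤ Real.pi) :
    pol k (Complex.exp (s + θ * Complex.I)) = Complex.exp (k θ s + θ * Complex.I) := by
  unfold pol
  rw [if_neg (Complex.exp_ne_zero _), Lg_exp (by simpa using h0) (by simpa using h1)]
  simp

lemma exists_polar {z : ℂ} (hz : z ≠ 0) (hi : 0 ≤ z.im) :
    ∃ s θ : ℝ, 0 ≤ θ ∧ θ ≤ Real.pi ∧ z = Complex.exp (s + θ * Complex.I) :=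
  ⟨(Lg z).re, (Lg z).im, (Lg_im_mem hi).1, (Lg_im_mem hi).2, by
    rw [Complex.re_add_im, exp_Lg hz]⟩

lemma exp_im_eq (s θ : ℝ) :
    (Complex.exp (s + θ * Complex.I)).im = Real.exp s * Real.sin θ := by
  rw [Complex.exp_im]; simp

lemma pol_im_nonneg (k : ℝ → ℝ → ℝ) {z : ℂ} (hi : 0 ≤ z.im) : 0 ≤ (pol k z).im := by
  by_cases hz : z = 0
  · simp [hz, pol_zero]
  obtain ⟨s, θ, h0, h1, rfl⟩ := exists_polar hz hi
  rw [pol_exp k h0 h1, exp_im_eq]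
  exact mul_nonneg (Real.exp_pos _).le (Real.sin_nonneg_of_nonneg_of_le_pi h0 h1)

lemma pol_im_eq_zero (k : ℝ → ℝ → ℝ) {z : ℂ} (hi : 0 ≤ z.im) : (pol k z).im = 0 ↔ z.im = 0 := by
  by_cases hz : z = 0
  · simp [hz, pol_zero]
  obtain ⟨s, θ, h0, h1, rfl⟩ := exists_polar hz hi
  rw [pol_exp k h0 h1, exp_im_eq, exp_im_eq]
  simp [(Real.exp_pos _).ne']

lemma pol_pol {k k' : ℝ → ℝ → ℝ} (h : ∀ θ s, k' θ (k θ s) = s) {z : ℂ} (hi : 0 ≤ z.im) :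
    pol k' (pol k z) = z := by
  by_cases hz : z = 0
  · simp [hz, pol_zero]
  obtain ⟨s, θ, h0, h1, rfl⟩ := exists_polar hz hi
  rw [pol_exp k h0 h1, pol_exp k' h0 h1, h]

lemma pol_continuousOn {k : ℝ → ℝ → ℝ} (hk : Continuous (Function.uncurry k))
    (hb : ∀ M : ℝ, ∃ s₀ : ℝ, ∀ s ≤ s₀, ∀ θ, 0 ≤ θ → θ ≤ Real.pi → k θ s ≤ M) :
    ContinuousOn (pol k) {z : ℂ | 0 ≤ z.im} := by
  intro z hi
  by_cases hz : z = 0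
  · subst hz
    rw [Metric.continuousWithinAt_iff]
    intro ε hε
    obtain ⟨s₀, hs₀⟩ := hb (Real.log (ε / 2))
    refine ⟨Real.exp s₀, Real.exp_pos _, fun {w} hw hd => ?_⟩
    rw [pol_zero, dist_zero_right]
    rw [dist_zero_right] at hd
    by_cases hw0 : w = 0
    · simpa [hw0, pol_zero] using hε
    obtain ⟨s, θ, h0, h1, rfl⟩ := exists_polar hw0 hw
    rw [pol_exp k h0 h1, Complex.norm_exp]
    rw [Complex.norm_exp] at hd
    simp only [Complex.add_re, Complex.ofReal_re, Complex.mul_re, Complex.I_re, mul_zero,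
      Complex.ofReal_im, Complex.I_im, mul_one, sub_self, add_zero] at hd ⊢
    have hs : s ≤ s₀ := (Real.exp_lt_exp.1 hd).le
    have := Real.exp_le_exp.2 (hs₀ s hs θ h0 h1)
    rw [Real.exp_log (by positivity)] at this
    linarith
  · have hL : ContinuousAt Lg z := (hasDerivAt_Lg hz hi).continuousAt
    have h1 : ContinuousAt (fun z => Complex.exp
        (k (Lg z).im (Lg z).re + (Lg z).im * Complex.I)) z := by
      have hre : ContinuousAt (fun z => (Lg z).re) z := Complex.continuous_re.continuousAt.comp hL
      have him : ContinuousAt (fun z => (Lg z).im) z := Complex.continuous_im.continuousAt.comp hL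
      have hkk : ContinuousAt (fun z => k (Lg z).im (Lg z).re) z :=
        hk.continuousAt.comp (f := fun z => ((Lg z).im, (Lg z).re)) (him.prodMk hre)
      have h2 : ContinuousAt (fun z => ((k (Lg z).im (Lg z).re : ℝ) : ℂ)) z :=
        Complex.continuous_ofReal.continuousAt.comp hkk
      have h3 : ContinuousAt (fun z => (((Lg z).im : ℝ) : ℂ)) z :=
        Complex.continuous_ofReal.continuousAt.comp him
      exact (h2.add (h3.mul continuousAt_const)).cexp
    refine ContinuousAt.continuousWithinAt (h1.congr ?_)
    filter_upwards [isOpen_ne.mem_nhds hz] with w hw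
    simp [pol, if_neg (show w ≠ 0 from hw)]

/-! ### gluing two half planes -/

/-- Glue two half plane maps. -/
def glueMap (A₁ B₁ A₂ B₂ : ℂ ≃L[ℝ] ℝ × ℝ) (k₁ k₂ : ℝ → ℝ → ℝ) (p : ℝ × ℝ) : ℝ × ℝ :=
  if 0 ≤ p.2 then B₁ (pol k₁ (A₁.symm p)) else B₂ (pol k₂ (A₂.symm p))

/-- Conditions on the linear charts of the two half planes. -/
structure Charts (A₁ A₂ : ℂ ≃L[ℝ] ℝ × ℝ) (κ : ℝ) : Prop where
  kk : κ * κ = 1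
  r₁ : ∀ x : ℝ, A₁ x = (κ * x, 0)
  r₂ : ∀ x : ℝ, A₂ x = (-(κ * x), 0)
  p₁ : ∃ n > 0, ∀ z, (A₁ z).2 = n * z.im
  p₂ : ∃ n > 0, ∀ z, (A₂ z).2 = -(n * z.im)

namespace Charts

variable {A₁ A₂ B₁ B₂ : ℂ ≃L[ℝ] ℝ × ℝ} {κ κ' : ℝ}

lemma up₁ (h : Charts A₁ A₂ κ) (z : ℂ) : 0 ≤ (A₁ z).2 ↔ 0 ≤ z.im := by
  obtain ⟨n, hn, hz⟩ := h.p₁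
  rw [hz]; exact mul_nonneg_iff_of_pos_left hn

lemma zero₁ (h : Charts A₁ A₂ κ) (z : ℂ) : (A₁ z).2 = 0 ↔ z.im = 0 := by
  obtain ⟨n, hn, hz⟩ := h.p₁
  rw [hz]; simp [hn.ne']

lemma up₂ (h : Charts A₁ A₂ κ) (z : ℂ) : (A₂ z).2 ≤ 0 ↔ 0 ≤ z.im := by
  obtain ⟨n, hn, hz⟩ := h.p₂
  rw [hz, neg_nonpos]; exact mul_nonneg_iff_of_pos_left hn

lemma zero₂ (h : Charts A₁ A₂ κ) (z : ℂ) : (A₂ z).2 = 0 ↔ z.im = 0 := by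
  obtain ⟨n, hn, hz⟩ := h.p₂
  rw [hz]; simp [hn.ne']

lemma sup₁ (h : Charts A₁ A₂ κ) {p : ℝ × ℝ} : 0 ≤ (A₁.symm p).im ↔ 0 ≤ p.2 := by
  rw [← h.up₁, A₁.apply_symm_apply]

lemma sup₂ (h : Charts A₁ A₂ κ) {p : ℝ × ℝ} : 0 ≤ (A₂.symm p).im ↔ p.2 ≤ 0 := by
  rw [← h.up₂, A₂.apply_symm_apply]

end Charts

/-- Matching conditions on the switching line. -/
def Matching (k₁ k₂ : ℝ → ℝ → ℝ) : Prop :=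
  (∀ s, k₁ 0 s = k₂ Real.pi s) ∧ (∀ s, k₁ Real.pi s = k₂ 0 s)

lemma exp_add_pi (s : ℝ) : Complex.exp (s + (Real.pi : ℝ) * Complex.I) = -(Real.exp s : ℝ) := by
  rw [Complex.exp_add, Complex.exp_pi_mul_I]; push_cast; ring

lemma exp_add_zero (s : ℝ) : Complex.exp (s + (0 : ℝ) * Complex.I) = (Real.exp s : ℝ) := by
  push_cast; simp

lemma pol_pos (k : ℝ → ℝ → ℝ) {x : ℝ} (hx : 0 < x) :
    pol k (x : ℂ) = ((Real.exp (k 0 (Real.log x)) : ℝ) : ℂ) := by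
  have := pol_exp k (s := Real.log x) (θ := 0) le_rfl Real.pi_pos.le
  rwa [exp_add_zero, exp_add_zero, Real.exp_log hx] at this

lemma pol_neg (k : ℝ → ℝ → ℝ) {x : ℝ} (hx : 0 < x) :
    pol k ((-x : ℝ) : ℂ) = ((-Real.exp (k Real.pi (Real.log x)) : ℝ) : ℂ) := by
  have := pol_exp k (s := Real.log x) (θ := Real.pi) Real.pi_pos.le le_rfl
  rw [exp_add_pi, exp_add_pi, Real.exp_log hx] at this
  push_cast at this ⊢
  exact this

section glue
variable {A₁ A₂ B₁ B₂ : ℂ ≃L[ℝ] ℝ × ℝ} {κ κ' : ℝ} {k₁ k₂ : ℝ → ℝ → ℝ}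

lemma glue_agree (hA : Charts A₁ A₂ κ) (hB : Charts B₁ B₂ κ') (hm : Matching k₁ k₂)
    {p : ℝ × ℝ} (hp : p.2 = 0) :
    B₁ (pol k₁ (A₁.symm p)) = B₂ (pol k₂ (A₂.symm p)) := by
  obtain ⟨x, y⟩ := p
  simp only at hp
  subst hp
  have h1 : A₁.symm (x, 0) = ((κ * x : ℝ) : ℂ) := by
    rw [ContinuousLinearEquiv.symm_apply_eq, hA.r₁, ← mul_assoc, hA.kk, one_mul]
  have h2 : A₂.symm (x, 0) = ((-(κ * x) : ℝ) : ℂ) := by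
    rw [ContinuousLinearEquiv.symm_apply_eq, hA.r₂, mul_neg, neg_neg, ← mul_assoc, hA.kk, one_mul]
  rw [h1, h2]
  generalize κ * x = u
  rcases lt_trichotomy u 0 with hu | hu | hu
  · obtain ⟨v, rfl⟩ : ∃ v, u = -v := ⟨-u, by ring⟩
    rw [neg_neg, pol_neg _ (by linarith), pol_pos _ (by linarith), hB.r₁, hB.r₂, hm.2]
    simp
  · subst hu; simp [pol_zero]
  · rw [pol_neg _ hu, pol_pos _ hu, hB.r₁, hB.r₂, hm.1]
    simp

lemma glue_up (p : ℝ × ℝ) (hp : 0 ≤ p.2) :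
    glueMap A₁ B₁ A₂ B₂ k₁ k₂ p = B₁ (pol k₁ (A₁.symm p)) := by simp [glueMap, hp]

lemma glue_down (hA : Charts A₁ A₂ κ) (hB : Charts B₁ B₂ κ') (hm : Matching k₁ k₂)
    (p : ℝ × ℝ) (hp : p.2 ≤ 0) :
    glueMap A₁ B₁ A₂ B₂ k₁ k₂ p = B₂ (pol k₂ (A₂.symm p)) := by
  rcases hp.lt_or_eq with h | h
  · simp [glueMap, h]
  · rw [glue_up _ h.ge, glue_agree hA hB hm h]

lemma glue_continuous (hA : Charts A₁ A₂ κ) (hB : Charts B₁ B₂ κ') (hm : Matching k₁ k₂)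
    (h₁ : ContinuousOn (pol k₁) {z : ℂ | 0 ≤ z.im})
    (h₂ : ContinuousOn (pol k₂) {z : ℂ | 0 ≤ z.im}) :
    Continuous (glueMap A₁ B₁ A₂ B₂ k₁ k₂) := by
  rw [← continuousOn_univ, show (univ : Set (ℝ × ℝ)) = {p | 0 ≤ p.2} ∪ {p | p.2 ≤ 0} by
    ext p; simp [le_total]]
  refine ContinuousOn.union_of_isClosed ?_ ?_
    (isClosed_le continuous_const continuous_snd) (isClosed_le continuous_snd continuous_const)
  · refine ContinuousOn.congr (f := fun p => B₁ (pol k₁ (A₁.symm p))) ?_ fun p hp => glue_up p hp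
    exact B₁.continuous.comp_continuousOn
      (h₁.comp A₁.symm.continuous.continuousOn fun p hp => hA.sup₁.2 hp)
  · refine ContinuousOn.congr (f := fun p => B₂ (pol k₂ (A₂.symm p))) ?_
      fun p hp => glue_down hA hB hm p hp
    exact B₂.continuous.comp_continuousOn
      (h₂.comp A₂.symm.continuous.continuousOn fun p hp => hA.sup₂.2 hp)

lemma glue_up_mem (hA : Charts A₁ A₂ κ) (hB : Charts B₁ B₂ κ')
    (p : ℝ × ℝ) (hp : 0 ≤ p.2) : 0 ≤ (glueMap A₁ B₁ A₂ B₂ k₁ k₂ p).2 := by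
  rw [glue_up p hp, hB.up₁]
  exact pol_im_nonneg _ (hA.sup₁.2 hp)

lemma glue_down_mem (hA : Charts A₁ A₂ κ) (hB : Charts B₁ B₂ κ') (hm : Matching k₁ k₂)
    (p : ℝ × ℝ) (hp : p.2 ≤ 0) : (glueMap A₁ B₁ A₂ B₂ k₁ k₂ p).2 ≤ 0 := by
  rw [glue_down hA hB hm p hp, hB.up₂]
  exact pol_im_nonneg _ (hA.sup₂.2 hp)

lemma glue_zero : glueMap A₁ B₁ A₂ B₂ k₁ k₂ (0, 0) = (0, 0) := by
  rw [glue_up _ le_rfl, show ((0, 0) : ℝ × ℝ) = 0 from rfl, map_zero, pol_zero, map_zero]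

lemma glue_inv {l₁ l₂ : ℝ → ℝ → ℝ} (hA : Charts A₁ A₂ κ) (hB : Charts B₁ B₂ κ')
    (hm : Matching k₁ k₂) (hm' : Matching l₁ l₂)
    (h₁ : ∀ θ s, l₁ θ (k₁ θ s) = s) (h₂ : ∀ θ s, l₂ θ (k₂ θ s) = s) (p : ℝ × ℝ) :
    glueMap B₁ A₁ B₂ A₂ l₁ l₂ (glueMap A₁ B₁ A₂ B₂ k₁ k₂ p) = p := by
  rcases le_total 0 p.2 with hp | hp
  · rw [glue_up _ (glue_up_mem hA hB p hp), glue_up p hp, B₁.symm_apply_apply,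
      pol_pol h₁ (hA.sup₁.2 hp), A₁.apply_symm_apply]
  · rw [glue_down hB hA hm' _ (glue_down_mem hA hB hm p hp), glue_down hA hB hm p hp,
      B₂.symm_apply_apply, pol_pol h₂ (hA.sup₂.2 hp), A₂.apply_symm_apply]

end glue

/-! ### Part 4: orbits -/

/-- Slope of the orbits in logarithmic coordinates. -/
def slope' (F : ℂ → ℂ) (θ s : ℝ) : ℝ :=
  (F (s + θ * Complex.I)).re / (F (s + θ * Complex.I)).im

/-- Data describing the orbits of `X` in a half plane. -/
structure HalfData (X : ℝ × ℝ → ℝ × ℝ) (L : ℂ ≃L[ℝ] ℝ × ℝ) (U : Set (ℝ × ℝ)) (F : ℂ → ℂ)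
    (S : ℝ → ℝ → ℝ) : Prop where
  cont : Continuous F
  low : ∃ m > 0, ∀ w, m ≤ (F w).im
  upp : ∃ M, 0 ≤ M ∧ ∀ w, ‖F w‖ ≤ M
  lip : ∃ K, 0 ≤ K ∧ ∀ θ s s' : ℝ, |slope' F θ s - slope' F θ s'| ≤ K * |s - s'|
  field : ∀ w, L (Complex.exp w) ∈ U → X (L (Complex.exp w)) = L (Complex.exp w * F w)
  zero : X 0 = 0
  deriv : ∀ σ θ, HasDerivAt (fun θ => S θ σ) (slope' F θ (S θ σ)) θ
  surj : ∀ θ s, ∃ σ, S θ σ = s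

lemma HalfData.bound {X : ℝ × ℝ → ℝ × ℝ} {L : ℂ ≃L[ℝ] ℝ × ℝ} {U : Set (ℝ × ℝ)} {F : ℂ → ℂ}
    {S : ℝ → ℝ → ℝ} (D : HalfData X L U F S) : ∃ C, ∀ p ∈ U, ‖X p‖ ≤ C * ‖p‖ := by
  obtain ⟨M, hM0, hM⟩ := D.upp
  refine ⟨‖(L : ℂ →L[ℝ] ℝ × ℝ)‖ * (‖(L.symm : ℝ × ℝ →L[ℝ] ℂ)‖ * M), fun p hp => ?_⟩
  by_cases h0 : p = 0
  · simp [h0, D.zero]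
  have hz : L.symm p ≠ 0 := by simpa using h0
  have hexp : Complex.exp (Complex.log (L.symm p)) = L.symm p := Complex.exp_log hz
  have := D.field (Complex.log (L.symm p)) (by rw [hexp]; simpa using hp)
  rw [hexp, L.apply_symm_apply] at this
  rw [this]
  have e1 : ‖L (L.symm p * F (Complex.log (L.symm p)))‖ ≤
      ‖(L : ℂ →L[ℝ] ℝ × ℝ)‖ * ‖L.symm p * F (Complex.log (L.symm p))‖ :=
    (L : ℂ →L[ℝ] ℝ × ℝ).le_opNorm _
  have e2 : ‖L.symm p‖ ≤ ‖(L.symm : ℝ × ℝ →L[ℝ] ℂ)‖ * ‖p‖ := (L.symm : ℝ × ℝ →L[ℝ] ℂ).le_opNorm _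
  have e3 : ‖L.symm p * F (Complex.log (L.symm p))‖ ≤
      (‖(L.symm : ℝ × ℝ →L[ℝ] ℂ)‖ * ‖p‖) * M := by
    rw [norm_mul]
    exact mul_le_mul e2 (hM _) (norm_nonneg _) (by positivity)
  calc _ ≤ _ := e1
    _ ≤ ‖(L : ℂ →L[ℝ] ℝ × ℝ)‖ * ((‖(L.symm : ℝ × ℝ →L[ℝ] ℂ)‖ * ‖p‖) * M) := by gcongr
    _ = _ := by ring

lemma mapsOrbits_half {X₁ X₂ : ℝ × ℝ → ℝ × ℝ} {L₁ L₂ : ℂ ≃L[ℝ] ℝ × ℝ} {U₁ U₂ : Set (ℝ × ℝ)}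
    {F₁ F₂ : ℂ → ℂ} {S₁ S₂ : ℝ → ℝ → ℝ} (D₁ : HalfData X₁ L₁ U₁ F₁ S₁)
    (D₂ : HalfData X₂ L₂ U₂ F₂ S₂) {H : ℝ × ℝ → ℝ × ℝ} {W W' : Set (ℝ × ℝ)}
    (hW : W ⊆ U₁) (hW2 : ∀ p ∈ W, 0 ≤ (L₁.symm p).im) (hW' : W' ⊆ U₂)
    (hmaps : MapsTo H W W') (h : ℝ → ℝ)
    (hH0 : H 0 = 0)
    (hH : ∀ θ σ : ℝ, 0 ≤ θ → θ ≤ Real.pi → L₁ (Complex.exp (S₁ θ σ + θ * Complex.I)) ∈ W →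
      H (L₁ (Complex.exp (S₁ θ σ + θ * Complex.I))) =
        L₂ (Complex.exp (S₂ θ (h σ) + θ * Complex.I))) :
    MapsOrbits X₁ X₂ H W W' := by
  intro γ I hI hγ hγW
  rcases I.eq_empty_or_nonempty with rfl | ⟨t₀, ht₀⟩
  · exact ⟨γ, ∅, id, ordConnected_empty, fun t ht => ht.elim, fun t ht => ht.elim,
      bijOn_empty _, fun t ht => ht.elim, continuousOn_empty _, fun t ht => ht.elim⟩
  by_cases hz : ∃ t ∈ I, γ t = 0
  · obtain ⟨t₁, ht₁, h0⟩ := hz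
    obtain ⟨C, hC⟩ := D₁.bound
    have hall : ∀ t ∈ I, γ t = 0 := fun t ht =>
      gron_zero γ (fun t => X₁ (γ t)) I hI C hγ (fun t ht => hC _ (hW (hγW t ht))) ht₁ ht h0
    refine ⟨fun _ => 0, I, id, hI, fun t ht => ?_, fun t ht => ?_, bijOn_id I,
      strictMono_id.strictMonoOn I, continuousOn_id, fun t ht => ?_⟩
    · rw [D₂.zero]; exact hasDerivAt_const t 0
    · have := hmaps (hγW t ht)
      rwa [hall t ht, hH0] at this
    · rw [hall t ht, hH0]
  push Not at hz
  -- logarithmic coordinates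
  let z : ℝ → ℂ := fun t => L₁.symm (γ t)
  have hz0 : ∀ t ∈ I, z t ≠ 0 := fun t ht => by simpa [z] using hz t ht
  have hzi : ∀ t ∈ I, 0 ≤ (z t).im := fun t ht => hW2 _ (hγW t ht)
  let w : ℝ → ℂ := fun t => Lg (z t)
  have hexp : ∀ t ∈ I, Complex.exp (w t) = z t := fun t ht => exp_Lg (hz0 t ht)
  have hLexp : ∀ t ∈ I, L₁ (Complex.exp (w t)) = γ t := fun t ht => by
    rw [hexp t ht]; exact L₁.apply_symm_apply _
  have hzd : ∀ t ∈ I, HasDerivAt z (z t * F₁ (w t)) t := fun t ht => by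
    have h1 := (L₁.symm : ℝ × ℝ →L[ℝ] ℂ).hasFDerivAt.comp_hasDerivAt t (hγ t ht)
    have h2 := D₁.field (w t) (by rw [hLexp t ht]; exact hW (hγW t ht))
    rw [hLexp t ht] at h2
    rw [h2, hexp t ht] at h1
    simpa [Function.comp_def, z] using h1
  have hwd : ∀ t ∈ I, HasDerivAt w (F₁ (w t)) t := fun t ht => by
    have h1 := (hasDerivAt_Lg (hz0 t ht) (hzi t ht)).comp t (hzd t ht)
    rwa [← mul_assoc, inv_mul_cancel₀ (hz0 t ht), one_mul] at h1
  let θ : ℝ → ℝ := fun t => (w t).im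
  have hsd : ∀ t ∈ I, HasDerivAt (fun t => (w t).re) (F₁ (w t)).re t := fun t ht =>
    Complex.reCLM.hasFDerivAt.comp_hasDerivAt t (hwd t ht)
  have hθd : ∀ t ∈ I, HasDerivAt θ (F₁ (w t)).im t := fun t ht =>
    Complex.imCLM.hasFDerivAt.comp_hasDerivAt t (hwd t ht)
  obtain ⟨σ, hσ⟩ := D₁.surj (θ t₀) (w t₀).re
  obtain ⟨M, hM0, hM⟩ := D₁.upp
  obtain ⟨m, hm, hmF⟩ := D₁.low
  obtain ⟨K, hK0, hK⟩ := D₁.lip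
  have hs : ∀ t ∈ I, (w t).re = S₁ (θ t) σ := by
    intro t ht
    have := gron_zero (fun t => (w t).re - S₁ (θ t) σ)
      (fun t => (F₁ (w t)).re - slope' F₁ (θ t) (S₁ (θ t) σ) * (F₁ (w t)).im) I hI (K * M)
      (fun t ht => (hsd t ht).sub ((D₁.deriv σ (θ t)).comp t (hθd t ht)))
      (fun t ht => ?_) ht₀ ht (by simp [hσ])
    · simpa [sub_eq_zero] using this
    · have hpos : (F₁ (w t)).im ≠ 0 := (hm.trans_le (hmF _)).ne'
      have e1 : (F₁ (w t)).re = slope' F₁ (θ t) (w t).re * (F₁ (w t)).im := by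
        simp only [slope', θ, Complex.re_add_im]
        rw [div_mul_cancel₀ _ hpos]
      rw [e1, ← sub_mul, Real.norm_eq_abs, abs_mul, Real.norm_eq_abs]
      have e2 : |(F₁ (w t)).im| ≤ M := (Complex.abs_im_le_norm _).trans (hM _)
      calc _ ≤ (K * |(w t).re - S₁ (θ t) σ|) * M :=
            mul_le_mul (hK _ _ _) e2 (abs_nonneg _) (by positivity)
        _ = _ := by ring
  have hw : ∀ t ∈ I, w t = S₁ (θ t) σ + θ t * Complex.I := fun t ht => by
    rw [← hs t ht, Complex.re_add_im]
  have hθm : StrictMonoOn θ I := by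
    refine strictMonoOn_of_hasDerivWithinAt_pos (f' := fun t => (F₁ (w t)).im) hI.convex
      (fun t ht => (hθd t ht).continuousAt.continuousWithinAt)
      (fun t ht => (hθd t (interior_subset ht)).hasDerivWithinAt)
      (fun t ht => hm.trans_le (hmF _))
  have hθ01 : ∀ t ∈ I, 0 ≤ θ t ∧ θ t ≤ Real.pi := fun t ht => Lg_im_mem (hzi t ht)
  -- target
  let ζ : ℝ → ℂ := fun θ => S₂ θ (h σ) + θ * Complex.I
  obtain ⟨M₂, hM₂0, hM₂⟩ := D₂.upp
  obtain ⟨m₂, hm₂, hmF₂⟩ := D₂.low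
  have hζd : ∀ x, HasDerivAt ζ ((slope' F₂ x (S₂ x (h σ)) : ℝ) + Complex.I) x := fun x => by
    have h1 := (D₂.deriv (h σ) x).ofReal_comp
    have h2 : HasDerivAt (fun x : ℝ => (x : ℂ) * Complex.I) Complex.I x := by
      simpa using (hasDerivAt_id x).ofReal_comp.mul_const Complex.I
    exact h1.add h2
  have hζc : Continuous ζ := continuous_iff_continuousAt.2 fun x => (hζd x).continuousAt
  obtain ⟨T, Ti, hTm, hTc, hTi, hTid⟩ := exists_time_change (f := fun x => (F₂ (ζ x)).im)
    (Complex.continuous_im.comp (D₂.cont.comp hζc)) hm₂ (fun x => hmF₂ _)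
    (fun x => (le_abs_self _).trans ((Complex.abs_im_le_norm _).trans (hM₂ _)))
  have hHγ : ∀ t ∈ I, H (γ t) = L₂ (Complex.exp (ζ (θ t))) := fun t ht => by
    have h1 := hLexp t ht
    rw [hw t ht] at h1
    rw [← h1]
    exact hH (θ t) σ (hθ01 t ht).1 (hθ01 t ht).2 (by rw [h1]; exact hγW t ht)
  have hτc : ContinuousOn (fun t => T (θ t)) I :=
    hTc.comp_continuousOn fun t ht => (hθd t ht).continuousAt.continuousWithinAt
  have hτm : StrictMonoOn (fun t => T (θ t)) I := hTm.comp_strictMonoOn hθm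
  refine ⟨fun u => L₂ (Complex.exp (ζ (Ti u))), (fun t => T (θ t)) '' I, fun t => T (θ t),
    (hI.isPreconnected.image _ hτc).ordConnected, ?_, ?_, hτm.injOn.bijOn_image, hτm, hτc, ?_⟩
  · rintro _ ⟨t, ht, rfl⟩
    have hmem : L₂ (Complex.exp (ζ (θ t))) ∈ U₂ := by
      rw [← hHγ t ht]; exact hW' (hmaps (hγW t ht))
    have h1 : HasDerivAt (fun u => ζ (Ti u)) (F₂ (ζ (θ t))) (T (θ t)) := by
      have h2 := (hζd (Ti (T (θ t)))).scomp (T (θ t)) (hTid (T (θ t)))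
      rw [hTi] at h2
      have hpos : (F₂ (ζ (θ t))).im ≠ 0 := (hm₂.trans_le (hmF₂ _)).ne'
      have e : slope' F₂ (θ t) (S₂ (θ t) (h σ)) = (F₂ (ζ (θ t))).re / (F₂ (ζ (θ t))).im := rfl
      have e2 : (F₂ (ζ (θ t))).im • (((slope' F₂ (θ t) (S₂ (θ t) (h σ)) : ℝ) : ℂ) + Complex.I)
          = F₂ (ζ (θ t)) := by
        rw [e]
        apply Complex.ext
        · simp; field_simp
        · simp
      rw [e2] at h2
      exact h2
    have h3 := (L₂ : ℂ →L[ℝ] ℝ × ℝ).hasFDerivAt.comp_hasDerivAt (T (θ t)) h1.cexp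
    show HasDerivAt _ (X₂ (L₂ (Complex.exp (ζ (Ti (T (θ t))))))) _
    rw [hTi, D₂.field _ hmem]
    rw [hTi] at h3
    exact h3
  · rintro _ ⟨t, ht, rfl⟩
    show L₂ (Complex.exp (ζ (Ti (T (θ t))))) ∈ W'
    rw [hTi, ← hHγ t ht]
    exact hmaps (hγW t ht)
  · intro t ht
    show _ = L₂ (Complex.exp (ζ (Ti (T (θ t)))))
    rw [hTi, hHγ t ht]

/-! ### Part 5: construction of the half plane data -/

lemma abs_sub_le_of_deriv {f f' : ℝ → ℝ} {C : ℝ} (hf : ∀ x, HasDerivAt f (f' x) x)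
    (hC : ∀ x, |f' x| ≤ C) (a b : ℝ) : |f b - f a| ≤ C * |b - a| := by
  have := Convex.norm_image_sub_le_of_norm_hasDerivWithin_le (f := f) (f' := f') (s := univ)
    (C := C) (fun x _ => (hf x).hasDerivWithinAt) (fun x _ => hC x) convex_univ (mem_univ a)
    (mem_univ b)
  simpa using this

lemma div_lip {v v' : ℂ} {m M : ℝ} (hm : 0 < m) (h1 : m ≤ v.im) (h2 : m ≤ v'.im)
    (hM : ‖v‖ ≤ M) : |v.re / v.im - v'.re / v'.im| ≤ 2 * M / m ^ 2 * ‖v - v'‖ := by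
  have hv : 0 < v.im := hm.trans_le h1
  have hv' : 0 < v'.im := hm.trans_le h2
  have e : v.re / v.im - v'.re / v'.im =
      (v.im * (v - v').re - v.re * (v - v').im) / (v.im * v'.im) := by
    simp only [Complex.sub_re, Complex.sub_im]; field_simp; ring
  have a1 : |v.im * (v - v').re| ≤ M * ‖v - v'‖ := by
    rw [abs_mul]
    exact mul_le_mul ((Complex.abs_im_le_norm _).trans hM) (Complex.abs_re_le_norm _)
      (abs_nonneg _) ((norm_nonneg _).trans hM)
  have a2 : |v.re * (v - v').im| ≤ M * ‖v - v'‖ := by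
    rw [abs_mul]
    exact mul_le_mul ((Complex.abs_re_le_norm _).trans hM) (Complex.abs_im_le_norm _)
      (abs_nonneg _) ((norm_nonneg _).trans hM)
  have hM0 : 0 ≤ M := (norm_nonneg _).trans hM
  rw [e, abs_div, abs_of_pos (mul_pos hv hv')]
  calc _ ≤ (2 * M * ‖v - v'‖) / (m ^ 2) := by
        apply div_le_div₀ (by positivity) _ (by positivity)
        · rw [sq]; exact mul_le_mul h1 h2 hm.le hv.le
        · calc _ ≤ |v.im * (v - v').re| + |v.re * (v - v').im| := abs_sub _ _
            _ ≤ _ := by linarith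
    _ = _ := by ring

lemma exists_eps {μ ω η : ℝ} (hω : 0 < ω) (hη : 0 < η) :
    ∃ ε > 0, ∀ v : ℂ, ‖v - ⟨μ, ω⟩‖ ≤ ε → |v.re / v.im - μ / ω| ≤ η ∧ ω / 2 ≤ v.im := by
  have hc : ContinuousAt (fun v : ℂ => v.re / v.im) ⟨μ, ω⟩ :=
    Complex.continuous_re.continuousAt.div Complex.continuous_im.continuousAt hω.ne'
  obtain ⟨δ, hδ, h⟩ := Metric.continuousAt_iff.1 hc η hη
  refine ⟨min (δ / 2) (ω / 2), by positivity, fun v hv => ⟨?_, ?_⟩⟩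
  · have : dist v ⟨μ, ω⟩ < δ := by
      rw [dist_eq_norm]
      linarith [min_le_left (δ / 2) (ω / 2)]
    exact (h this).le
  · have h1 := (Complex.abs_im_le_norm (v - ⟨μ, ω⟩)).trans (hv.trans (min_le_right _ _))
    rw [abs_le] at h1
    have := h1.1
    simp only [Complex.sub_im] at this
    linarith

lemma rem_lip {Rem : ℂ → ℂ} {ε r : ℝ} (hε : 0 ≤ ε) (h0 : Rem 0 = 0)
    (hR : ∀ z z', ‖z‖ ≤ r → ‖z'‖ ≤ r → ‖Rem z - Rem z'‖ ≤ ε * ‖z - z'‖) {t t' θ : ℝ}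
    (htt : t ≤ t') (ht' : Real.exp t' ≤ r) :
    ‖Rem (Complex.exp (t + θ * Complex.I)) / Complex.exp (t + θ * Complex.I) -
      Rem (Complex.exp (t' + θ * Complex.I)) / Complex.exp (t' + θ * Complex.I)‖
      ≤ 2 * ε * |t - t'| := by
  set z := Complex.exp (t + θ * Complex.I) with hz
  set z' := Complex.exp (t' + θ * Complex.I) with hz'
  have hz0 : z ≠ 0 := Complex.exp_ne_zero _
  have hz'0 : z' ≠ 0 := Complex.exp_ne_zero _
  have nz : ‖z‖ = Real.exp t := by rw [hz, Complex.norm_exp]; simp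
  have nz' : ‖z'‖ = Real.exp t' := by rw [hz', Complex.norm_exp]; simp
  have hzr : ‖z‖ ≤ r := by rw [nz]; exact (Real.exp_le_exp.2 htt).trans ht'
  have hz'r : ‖z'‖ ≤ r := by rw [nz']; exact ht'
  have hr0 : 0 ≤ r := (norm_nonneg _).trans hzr
  have e : Rem z / z - Rem z' / z' = ((Rem z - Rem z') + Rem z / z * (z' - z)) / z' := by
    field_simp; ring
  have b1 := hR z z' hzr hz'r
  have b2 : ‖Rem z / z‖ ≤ ε := by
    have := hR z 0 hzr (by simpa using hr0)
    rw [h0, sub_zero, sub_zero] at this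
    rw [norm_div, div_le_iff₀ (norm_pos_iff.2 hz0)]
    exact this
  have ez : z = z' * ((Real.exp (t - t') : ℝ) : ℂ) := by
    rw [hz, hz', Complex.ofReal_exp, ← Complex.exp_add]; congr 1; push_cast; ring
  have b3 : ‖z - z'‖ ≤ ‖z'‖ * |t - t'| := by
    have : z - z' = z' * ((Real.exp (t - t') - 1 : ℝ) : ℂ) := by
      rw [ez]; push_cast; ring
    rw [this, norm_mul, Complex.norm_real, Real.norm_eq_abs]
    apply mul_le_mul_of_nonneg_left _ (norm_nonneg _)
    have h1 : Real.exp (t - t') ≤ 1 := Real.exp_le_one_iff.2 (by linarith)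
    have h2 := Real.add_one_le_exp (t - t')
    rw [abs_of_nonpos (by linarith), abs_of_nonpos (by linarith)]
    linarith
  rw [e, norm_div, div_le_iff₀ (norm_pos_iff.2 hz'0)]
  calc _ ≤ ‖Rem z - Rem z'‖ + ‖Rem z / z * (z' - z)‖ := norm_add_le _ _
    _ ≤ ε * ‖z - z'‖ + ε * ‖z - z'‖ := by
        rw [norm_mul, norm_sub_rev z' z]
        gcongr
    _ = 2 * ε * ‖z - z'‖ := by ring
    _ ≤ 2 * ε * (‖z'‖ * |t - t'|) := by gcongr
    _ = _ := by ring

lemma half_exists {X : ℝ × ℝ → ℝ × ℝ} {L : ℂ ≃L[ℝ] ℝ × ℝ} {A : ℝ × ℝ →L[ℝ] ℝ × ℝ}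
    {μ ω η : ℝ} (hω : 0 < ω) (hη : 0 < η) (hX0 : X 0 = 0) (hX : HasStrictFDerivAt X A 0)
    (hA : ∀ z, A (L z) = L (⟨μ, ω⟩ * z)) :
    ∃ (U : Set (ℝ × ℝ)) (F : ℂ → ℂ) (S R : ℝ → ℝ → ℝ) (B : ℝ), U ∈ nhds (0 : ℝ × ℝ) ∧
      HalfData X L U F S ∧ (∀ σ, S 0 σ = σ) ∧
      Continuous (Function.uncurry S) ∧ Continuous (Function.uncurry R) ∧
      (∀ θ σ, R θ (S θ σ) = σ) ∧ (∀ θ s, S θ (R θ s) = s) ∧ (∀ θ, StrictMono (S θ)) ∧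
      (∀ θ σ, |S θ σ - σ| ≤ B * |θ|) ∧
      (∀ σ, |S Real.pi σ - σ - Real.pi * (μ / ω)| ≤ Real.pi * η) := by
  obtain ⟨ε, hε, hεv⟩ := exists_eps (μ := μ) hω hη
  let lam : ℂ := ⟨μ, ω⟩
  let Xt : ℂ → ℂ := fun z => L.symm (X (L z))
  let φ : ℂ →L[ℝ] ℂ := (L.symm : ℝ × ℝ →L[ℝ] ℂ).comp (A.comp (L : ℂ →L[ℝ] ℝ × ℝ))
  have hφ : ∀ z, φ z = lam * z := fun z => by simp [φ, hA, lam]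
  have hXt : HasStrictFDerivAt Xt φ 0 := by
    have h1 : HasStrictFDerivAt X A (L 0) := by rw [map_zero]; exact hX
    exact (L.symm : ℝ × ℝ →L[ℝ] ℂ).hasStrictFDerivAt.comp (0 : ℂ)
      (h1.comp (0 : ℂ) (L : ℂ →L[ℝ] ℝ × ℝ).hasStrictFDerivAt)
  obtain ⟨s, hs, happ⟩ := hXt.approximates_deriv_on_nhds (c := ⟨ε, hε.le⟩) (Or.inr hε)
  obtain ⟨r, hr, hrs⟩ := Metric.nhds_basis_closedBall.mem_iff.1 hs
  let Rem : ℂ → ℂ := fun z => Xt z - lam * z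
  have hRem0 : Rem 0 = 0 := by simp [Rem, Xt, hX0]
  have hRem : ∀ z z', ‖z‖ ≤ r → ‖z'‖ ≤ r → ‖Rem z - Rem z'‖ ≤ ε * ‖z - z'‖ := by
    intro z z' hz hz'
    have := happ z (hrs (by simpa using hz)) z' (hrs (by simpa using hz'))
    rw [hφ] at this
    have e : Rem z - Rem z' = Xt z - Xt z' - lam * (z - z') := by simp only [Rem]; ring
    rw [e]; exact this
  let s₀ := Real.log r
  have hexps : ∀ t, Real.exp (min t s₀) ≤ r := fun t => by
    calc _ ≤ Real.exp s₀ := Real.exp_le_exp.2 (min_le_right _ _)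
      _ = r := Real.exp_log hr
  let e : ℂ → ℂ := fun w => Complex.exp ((min w.re s₀ : ℝ) + w.im * Complex.I)
  have hen : ∀ w, ‖e w‖ ≤ r := fun w => by
    simp only [e]; rw [Complex.norm_exp]; simpa using hexps w.re
  have he0 : ∀ w, e w ≠ 0 := fun w => Complex.exp_ne_zero _
  have hec : Continuous e := by
    simp only [e]
    have h1 : Continuous (fun w : ℂ => min w.re s₀) := Complex.continuous_re.min continuous_const
    exact Complex.continuous_exp.comp ((Complex.continuous_ofReal.comp h1).add
      ((Complex.continuous_ofReal.comp Complex.continuous_im).mul continuous_const))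
  let F : ℂ → ℂ := fun w => lam + Rem (e w) / e w
  have hFlam : ∀ w, ‖F w - lam‖ ≤ ε := fun w => by
    have := hRem (e w) 0 (hen w) (by simpa using hr.le)
    rw [hRem0, sub_zero, sub_zero] at this
    simp only [F, add_sub_cancel_left]
    rw [norm_div, div_le_iff₀ (norm_pos_iff.2 (he0 w))]
    exact this
  have hRemc : ContinuousOn Rem (Metric.closedBall 0 r) := by
    have : LipschitzOnWith ⟨ε, hε.le⟩ Rem (Metric.closedBall 0 r) :=
      LipschitzOnWith.of_dist_le_mul fun z hz z' hz' => by
        rw [dist_eq_norm, dist_eq_norm]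
        exact hRem z z' (by simpa using hz) (by simpa using hz')
    exact this.continuousOn
  have hFc : Continuous F := by
    have h1 : Continuous (fun w => Rem (e w)) :=
      hRemc.comp_continuous hec fun w => by simpa using hen w
    exact continuous_const.add (h1.div hec he0)
  have hlow : ∀ w, ω / 2 ≤ (F w).im := fun w => (hεv _ (hFlam w)).2
  have hslope : ∀ w, |(F w).re / (F w).im - μ / ω| ≤ η := fun w => (hεv _ (hFlam w)).1
  have hupp : ∀ w, ‖F w‖ ≤ ‖lam‖ + ε := fun w => by
    calc ‖F w‖ = ‖lam + (F w - lam)‖ := by congr 1; ring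
      _ ≤ _ := (norm_add_le _ _).trans (by linarith [hFlam w])
  have hFlip : ∀ θ s s' : ℝ, ‖F (s + θ * Complex.I) - F (s' + θ * Complex.I)‖
      ≤ 2 * ε * |s - s'| := by
    have hes : ∀ s θ : ℝ, e (s + θ * Complex.I) =
        Complex.exp ((min s s₀ : ℝ) + θ * Complex.I) := fun s θ => by simp [e]
    intro θ s s'
    simp only [F, add_sub_add_left_eq_sub]
    rw [hes, hes]
    have hmin : |min s s₀ - min s' s₀| ≤ |s - s'| := by
      have := abs_min_sub_min_le_max s s₀ s' s₀
      simpa using this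
    calc _ ≤ 2 * ε * |min s s₀ - min s' s₀| := by
          rcases le_total (min s s₀) (min s' s₀) with h | h
          · exact rem_lip hε.le hRem0 hRem h (hexps s')
          · rw [norm_sub_rev, abs_sub_comm]
            exact rem_lip hε.le hRem0 hRem h (hexps s)
      _ ≤ _ := by gcongr
  set K := 2 * (‖lam‖ + ε) / (ω / 2) ^ 2 * (2 * ε) with hKdef
  have hK0 : 0 ≤ K := by positivity
  have hlip : ∀ θ s s' : ℝ, |slope' F θ s - slope' F θ s'| ≤ K * |s - s'| := by
    intro θ s s'
    calc _ ≤ 2 * (‖lam‖ + ε) / (ω / 2) ^ 2 *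
          ‖F (s + θ * Complex.I) - F (s' + θ * Complex.I)‖ :=
          div_lip (by positivity) (hlow _) (hlow _) (hupp _)
      _ ≤ 2 * (‖lam‖ + ε) / (ω / 2) ^ 2 * (2 * ε * |s - s'|) := by
          gcongr; exact hFlip θ s s'
      _ = _ := by rw [hKdef]; ring
  have hgc : Continuous (Function.uncurry (slope' F)) := by
    have h1 : Continuous (fun p : ℝ × ℝ => F (p.2 + p.1 * Complex.I)) :=
      hFc.comp (by fun_prop)
    exact (Complex.continuous_re.comp h1).div (Complex.continuous_im.comp h1)
      fun p => ne_of_gt (lt_of_lt_of_le (by positivity) (hlow _))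
  have hgB : ∀ θ s, |slope' F θ s| ≤ |μ / ω| + η := fun θ s => by
    have h1 := hslope (s + θ * Complex.I)
    have h2 := abs_add_le (slope' F θ s - μ / ω) (μ / ω)
    rw [sub_add_cancel] at h2
    have h3 : |slope' F θ s - μ / ω| ≤ η := h1
    linarith
  obtain ⟨S, R, hS0, hSd, hSc, hRc, hRS, hSR, hSm⟩ := ode_flow hK0 hgc hlip hgB
  refine ⟨{p | ‖L.symm p‖ < r}, F, S, R, |μ / ω| + η, ?_, ?_, hS0, hSc, hRc, hRS, hSR, hSm, ?_, ?_⟩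
  · refine (isOpen_lt (L.symm.continuous.norm) continuous_const).mem_nhds ?_
    simpa using hr
  · refine ⟨hFc, ⟨ω / 2, by positivity, hlow⟩, ⟨‖lam‖ + ε, by positivity, hupp⟩, ⟨K, hK0, hlip⟩,
      fun w hw => ?_, hX0, hSd, fun θ s => ⟨R θ s, hSR θ s⟩⟩
    have hw' : ‖Complex.exp w‖ < r := by simpa using hw
    rw [Complex.norm_exp] at hw'
    have hws : w.re ≤ s₀ := ((Real.lt_log_iff_exp_lt hr).2 hw').le
    have hew : e w = Complex.exp w := by
      simp only [e]; rw [min_eq_left hws, Complex.re_add_im]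
    have : Complex.exp w * F w = Xt (Complex.exp w) := by
      simp only [F]; rw [hew]
      have := Complex.exp_ne_zero w
      simp only [Rem]
      field_simp
      ring
    rw [this]
    simp [Xt]
  · intro θ σ
    have := abs_sub_le_of_deriv (hSd σ) (fun x => hgB x _) 0 θ
    rwa [hS0, sub_zero] at this
  · intro σ
    have := abs_sub_le_of_deriv (f := fun θ => S θ σ - θ * (μ / ω))
      (f' := fun θ => slope' F θ (S θ σ) - μ / ω) (C := η)
      (fun θ => by simpa using (hSd σ θ).fun_sub ((hasDerivAt_id θ).mul_const (μ / ω)))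
      (fun θ => hslope _) 0 Real.pi
    rw [hS0] at this
    rw [sub_zero, abs_of_pos Real.pi_pos, zero_mul, sub_zero] at this
    rw [mul_comm Real.pi η]
    convert this using 2
    ring

/-! ### Part 6: assembly -/

/-- The linear focus. -/
def linF (α : ℝ) (p : ℝ × ℝ) : ℝ × ℝ := (α * p.1 - p.2, p.1 + α * p.2)

lemma slope_const (α θ s : ℝ) : slope' (fun _ => (⟨α, 1⟩ : ℂ)) θ s = α := by
  simp [slope']

lemma lin_half (α : ℝ) (L : ℂ ≃L[ℝ] ℝ × ℝ) (hL : ∀ z, linF α (L z) = L (z * ⟨α, 1⟩)) :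
    HalfData (linF α) L univ (fun _ => ⟨α, 1⟩) (fun θ σ => σ + α * θ) where
  cont := continuous_const
  low := ⟨1, one_pos, fun _ => le_rfl⟩
  upp := ⟨_, norm_nonneg _, fun _ => le_rfl⟩
  lip := ⟨0, le_rfl, fun θ s s' => by simp [slope_const]⟩
  field := fun w _ => hL _
  zero := by simp [linF]
  deriv := fun σ θ => by
    rw [slope_const]
    simpa using ((hasDerivAt_id θ).const_mul α).const_add σ
  surj := fun θ s => ⟨s - α * θ, by simp⟩

/-- Linear chart `u + i v ↦ (κ u + m v, n v)`. -/
def chart (κ m n : ℝ) (hκ : κ * κ = 1) (hn : n ≠ 0) : ℂ ≃L[ℝ] ℝ × ℝ :=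
  LinearEquiv.toContinuousLinearEquiv
    { toFun := fun z => (κ * z.re + m * z.im, n * z.im)
      invFun := fun p => ⟨κ * (p.1 - m * (p.2 / n)), p.2 / n⟩
      map_add' := fun z w => by ext <;> simp <;> ring
      map_smul' := fun c z => by ext <;> simp <;> ring
      left_inv := fun z => by
        apply Complex.ext
        · simp only
          rw [mul_div_cancel_left₀ _ hn]
          linear_combination z.re * hκ
        · simp only
          rw [mul_div_cancel_left₀ _ hn]
      right_inv := fun p => by
        apply Prod.ext
        · simp only
          linear_combination (p.1 - m * (p.2 / n)) * hκ
        · simp only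
          rw [mul_div_cancel₀ _ hn] }

lemma chart_apply (κ m n : ℝ) (hκ : κ * κ = 1) (hn : n ≠ 0) (z : ℂ) :
    chart κ m n hκ hn z = (κ * z.re + m * z.im, n * z.im) := rfl

lemma charts_mk {κ m n m' n' : ℝ} (hκ : κ * κ = 1) (hκ' : (-κ) * (-κ) = 1) (hn : 0 < n)
    (hn' : n' < 0) : Charts (chart κ m n hκ hn.ne') (chart (-κ) m' n' hκ' hn'.ne) κ where
  kk := hκ
  r₁ := fun x => by simp [chart_apply]
  r₂ := fun x => by simp [chart_apply]
  p₁ := ⟨n, hn, fun z => by simp [chart_apply]⟩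
  p₂ := ⟨-n', by linarith, fun z => by simp [chart_apply]⟩

/-- The conditions on the flow box data used in the gluing. -/
structure FlowData (S R : ℝ → ℝ → ℝ) : Prop where
  cS : Continuous (Function.uncurry S)
  cR : Continuous (Function.uncurry R)
  RS : ∀ θ σ, R θ (S θ σ) = σ
  SR : ∀ θ s, S θ (R θ s) = s
  bd : ∃ B, ∀ θ σ, |S θ σ - σ| ≤ B * |θ|

lemma FlowData.unif {S R : ℝ → ℝ → ℝ} (D : FlowData S R) : ∃ C, ∀ θ σ, 0 ≤ θ → θ ≤ Real.pi →
    S θ σ ≤ σ + C ∧ R θ σ ≤ σ + C := by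
  obtain ⟨B, hB⟩ := D.bd
  have hB0 : 0 ≤ B := by
    have := (abs_nonneg _).trans (hB 1 0); simpa using this
  refine ⟨B * Real.pi, fun θ σ h0 h1 => ?_⟩
  have e : B * |θ| ≤ B * Real.pi := by rw [abs_of_nonneg h0]; gcongr
  have e1 := abs_le.1 ((hB θ σ).trans e)
  have e2 := abs_le.1 ((hB θ (R θ σ)).trans e)
  rw [D.SR] at e2
  constructor <;> linarith

/-- Radial part of the conjugacy. -/
def kf (α : ℝ) (R : ℝ → ℝ → ℝ) (h : ℝ ≃o ℝ) (θ s : ℝ) : ℝ := h (R θ s) + α * θ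
/-- Radial part of the inverse conjugacy. -/
def lf (α : ℝ) (S : ℝ → ℝ → ℝ) (h : ℝ ≃o ℝ) (θ w : ℝ) : ℝ := S θ (h.symm (w - α * θ))

lemma lf_kf {S R : ℝ → ℝ → ℝ} (D : FlowData S R) (α : ℝ) (h : ℝ ≃o ℝ) (θ s : ℝ) :
    lf α S h θ (kf α R h θ s) = s := by simp [lf, kf, D.SR]

lemma kf_lf {S R : ℝ → ℝ → ℝ} (D : FlowData S R) (α : ℝ) (h : ℝ ≃o ℝ) (θ s : ℝ) :
    kf α R h θ (lf α S h θ s) = s := by simp [lf, kf, D.RS]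

lemma abs_mul_le_pi {α θ : ℝ} (hα : |α| ≤ 1) (h0 : 0 ≤ θ) (h1 : θ ≤ Real.pi) :
    |α * θ| ≤ Real.pi := by
  rw [abs_mul, abs_of_nonneg h0]
  nlinarith [abs_nonneg α]

lemma kf_cont {S R : ℝ → ℝ → ℝ} (D : FlowData S R) {α : ℝ} (hα : |α| ≤ 1) (h : ℝ ≃o ℝ) :
    ContinuousOn (pol (kf α R h)) {z : ℂ | 0 ≤ z.im} := by
  apply pol_continuousOn
  · have := h.continuous.comp D.cR
    exact this.add (continuous_const.mul continuous_fst)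
  · intro M
    obtain ⟨C, hC⟩ := D.unif
    refine ⟨h.symm (M - Real.pi) - C, fun s hs θ h0 h1 => ?_⟩
    have e1 : R θ s ≤ h.symm (M - Real.pi) := by linarith [(hC θ s h0 h1).2]
    have e2 := h.monotone e1
    rw [h.apply_symm_apply] at e2
    have := (abs_le.1 (abs_mul_le_pi hα h0 h1)).2
    unfold kf; linarith

lemma lf_cont {S R : ℝ → ℝ → ℝ} (D : FlowData S R) {α : ℝ} (hα : |α| ≤ 1) (h : ℝ ≃o ℝ) :
    ContinuousOn (pol (lf α S h)) {z : ℂ | 0 ≤ z.im} := by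
  apply pol_continuousOn
  · have e : Continuous fun p : ℝ × ℝ => (p.1, h.symm (p.2 - α * p.1)) :=
      continuous_fst.prodMk (h.symm.continuous.comp
        (continuous_snd.sub (continuous_const.mul continuous_fst)))
    exact D.cS.comp e
  · intro M
    obtain ⟨C, hC⟩ := D.unif
    refine ⟨h (M - C) - Real.pi, fun s hs θ h0 h1 => ?_⟩
    have := (abs_le.1 (abs_mul_le_pi hα h0 h1)).1
    have e2 : h.symm (s - α * θ) ≤ M - C := by
      rw [← h.symm_apply_apply (M - C)]
      exact h.symm.monotone (by linarith)
    have := (hC θ (h.symm (s - α * θ)) h0 h1).1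
    unfold lf; linarith

lemma matching_inv {k₁ k₂ l₁ l₂ : ℝ → ℝ → ℝ} (hm : Matching k₁ k₂)
    (a₁ : ∀ θ s, k₁ θ (l₁ θ s) = s) (b₂ : ∀ θ s, l₂ θ (k₂ θ s) = s) : Matching l₁ l₂ := by
  constructor
  · intro s
    rw [← b₂ Real.pi (l₁ 0 s), ← hm.1, a₁]
  · intro s
    rw [← b₂ 0 (l₁ Real.pi s), ← hm.2, a₁]

lemma glue_final {X Y X' Y' : ℝ × ℝ → ℝ × ℝ} {A₁ A₂ B₁ B₂ : ℂ ≃L[ℝ] ℝ × ℝ} {κ κ' α : ℝ}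
    {U₁ U₂ : Set (ℝ × ℝ)} {F₁ F₂ G₁ G₂ : ℂ → ℂ} {S₁ R₁ S₂ R₂ : ℝ → ℝ → ℝ}
    (hA : Charts A₁ A₂ κ) (hB : Charts B₁ B₂ κ') (hα : |α| ≤ 1)
    (hU₁ : U₁ ∈ nhds 0) (hU₂ : U₂ ∈ nhds 0)
    (D₁ : HalfData X A₁ U₁ F₁ S₁) (D₂ : HalfData Y A₂ U₂ F₂ S₂)
    (E₁ : HalfData X' B₁ univ G₁ (fun θ σ => σ + α * θ))
    (E₂ : HalfData Y' B₂ univ G₂ (fun θ σ => σ + α * θ))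
    (f₁ : FlowData S₁ R₁) (f₂ : FlowData S₂ R₂) (h₁ h₂ : ℝ ≃o ℝ)
    (hm : Matching (kf α R₁ h₁) (kf α R₂ h₂)) : LocalSigmaEquiv X Y X' Y' := by
  have hm' : Matching (lf α S₁ h₁) (lf α S₂ h₂) :=
    matching_inv hm (kf_lf f₁ α h₁) (lf_kf f₂ α h₂)
  set H := glueMap A₁ B₁ A₂ B₂ (kf α R₁ h₁) (kf α R₂ h₂) with hH
  set G := glueMap B₁ A₁ B₂ A₂ (lf α S₁ h₁) (lf α S₂ h₂) with hG
  have cH : Continuous H := glue_continuous hA hB hm (kf_cont f₁ hα h₁) (kf_cont f₂ hα h₂)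
  have cG : Continuous G := glue_continuous hB hA hm' (lf_cont f₁ hα h₁) (lf_cont f₂ hα h₂)
  have GH : ∀ p, G (H p) = p := glue_inv hA hB hm hm' (lf_kf f₁ α h₁) (lf_kf f₂ α h₂)
  have HG : ∀ p, H (G p) = p := glue_inv hB hA hm' hm (kf_lf f₁ α h₁) (kf_lf f₂ α h₂)
  have H0 : H 0 = 0 := glue_zero
  have G0 : G 0 = 0 := glue_zero
  have Hu : ∀ p : ℝ × ℝ, 0 ≤ p.2 → 0 ≤ (H p).2 := glue_up_mem hA hB
  have Hd : ∀ p : ℝ × ℝ, p.2 ≤ 0 → (H p).2 ≤ 0 := glue_down_mem hA hB hm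
  have Gu : ∀ p : ℝ × ℝ, 0 ≤ p.2 → 0 ≤ (G p).2 := glue_up_mem hB hA
  have Gd : ∀ p : ℝ × ℝ, p.2 ≤ 0 → (G p).2 ≤ 0 := glue_down_mem hB hA hm'
  have hU : U₁ ∩ U₂ ∈ nhds (0 : ℝ × ℝ) := inter_mem hU₁ hU₂
  refine ⟨U₁ ∩ U₂, G ⁻¹' (U₁ ∩ U₂), H, G, hU, cG.continuousAt.preimage_mem_nhds (by
    change U₁ ∩ U₂ ∈ nhds (G 0); rw [G0]; exact hU), cH.continuousOn, cG.continuousOn,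
    ⟨fun p hp => by rw [mem_preimage, GH]; exact hp,
      fun p _ q _ hpq => by rw [← GH p, hpq, GH], fun q hq => ⟨G q, hq, HG q⟩⟩,
    fun p _ => GH p, fun q _ => HG q, H0, ?_, ?_, ?_, ?_, ?_⟩
  · ext q
    constructor
    · rintro ⟨p, ⟨hp, h0⟩, rfl⟩
      refine ⟨by rw [mem_preimage, GH]; exact hp, ?_⟩
      exact le_antisymm (Hd p (le_of_eq h0)) (Hu p (ge_of_eq h0))
    · rintro ⟨hq, h0⟩
      exact ⟨G q, ⟨hq, le_antisymm (Gd q (le_of_eq h0)) (Gu q (ge_of_eq h0))⟩, HG q⟩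
  · refine mapsOrbits_half D₁ E₁ (fun p hp => hp.1.1) (fun p hp => hA.sup₁.2 hp.2)
      (subset_univ _) (fun p hp => ⟨by rw [mem_preimage, GH]; exact hp.1, Hu p hp.2⟩) h₁ H0 ?_
    intro θ σ h0 h1 hmem
    rw [hH, glue_up _ hmem.2, A₁.symm_apply_apply, pol_exp _ h0 h1, kf, f₁.RS]
  · refine mapsOrbits_half D₂ E₂ (fun p hp => hp.1.2) (fun p hp => hA.sup₂.2 hp.2)
      (subset_univ _) (fun p hp => ⟨by rw [mem_preimage, GH]; exact hp.1, Hd p hp.2⟩) h₂ H0 ?_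
    intro θ σ h0 h1 hmem
    rw [hH, glue_down hA hB hm _ hmem.2, A₂.symm_apply_apply, pol_exp _ h0 h1, kf, f₂.RS]
  · refine mapsOrbits_half E₁ D₁ (subset_univ _) (fun p hp => hB.sup₁.2 hp.2)
      (fun p hp => hp.1.1) (fun p hp => ⟨hp.1, Gu p hp.2⟩) h₁.symm G0 ?_
    intro θ σ h0 h1 hmem
    rw [hG, glue_up _ hmem.2, B₁.symm_apply_apply, pol_exp _ h0 h1, lf, add_sub_cancel_right]
  · refine mapsOrbits_half E₂ D₂ (subset_univ _) (fun p hp => hB.sup₂.2 hp.2)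
      (fun p hp => hp.1.2) (fun p hp => ⟨hp.1, Gd p hp.2⟩) h₂.symm G0 ?_
    intro θ σ h0 h1 hmem
    rw [hG, glue_down hB hA hm' _ hmem.2, B₂.symm_apply_apply, pol_exp _ h0 h1, lf,
      add_sub_cancel_right]

/-- Real part, imaginary part and sign facts for a focus. -/
lemma eig_facts (X : ℝ × ℝ → ℝ × ℝ) (h : (eig1 X).im ≠ 0) :
    (eig1 X).re = trJ X / 2 ∧ 0 < (eig1 X).im ∧
      4 * (eig1 X).im ^ 2 = 4 * detJ X - trJ X ^ 2 := by
  unfold eig1 at *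
  split_ifs at * with hd
  · exact absurd (Complex.ofReal_im _) h
  · have hpos : 0 < 4 * detJ X - trJ X ^ 2 := by push Not at hd; linarith
    have hs := Real.sqrt_pos.2 hpos
    have hq := Real.sq_sqrt hpos.le
    generalize Real.sqrt (4 * detJ X - trJ X ^ 2) = r at *
    simp only [Complex.add_re, Complex.add_im, Complex.ofReal_re, Complex.ofReal_im,
      Complex.mul_re, Complex.mul_im, Complex.I_re, Complex.I_im]
    refine ⟨by ring, by linarith, by rw [← hq]; ring⟩

lemma fderiv_jac (X : ℝ × ℝ → ℝ × ℝ) (x y : ℝ) : fderiv ℝ X 0 (x, y) =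
    (jac11 X * x + jac12 X * y, jac21 X * x + jac22 X * y) := by
  have : ((x, y) : ℝ × ℝ) = x • ((1, 0) : ℝ × ℝ) + y • ((0, 1) : ℝ × ℝ) := by simp
  rw [this, map_add, map_smul, map_smul]
  unfold jac11 jac12 jac21 jac22
  rw [show ((0, 0) : ℝ × ℝ) = 0 from rfl]
  ext <;> simp <;> ring

lemma chart_conj (X : ℝ × ℝ → ℝ × ℝ) {κ ω : ℝ} (hκ : κ * κ = 1) (hω : 0 < ω)
    (hd : 4 * ω ^ 2 = 4 * detJ X - trJ X ^ 2) (hn : κ * jac21 X / ω ≠ 0) (z : ℂ) :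
    fderiv ℝ X 0 (chart κ (κ * (jac11 X - jac22 X) / (2 * ω)) (κ * jac21 X / ω) hκ hn z) =
      chart κ (κ * (jac11 X - jac22 X) / (2 * ω)) (κ * jac21 X / ω) hκ hn
        (⟨trJ X / 2, ω⟩ * z) := by
  have hω' := hω.ne'
  rw [chart_apply, chart_apply, fderiv_jac]
  unfold detJ trJ at *
  simp only [Complex.mul_re, Complex.mul_im]
  apply Prod.ext
  · simp only
    field_simp
    linear_combination (κ * z.im) * hd
  · simp only
    field_simp
    ring

lemma exists_half {X : ℝ × ℝ → ℝ × ℝ} {U : Set (ℝ × ℝ)} (hU : U ∈ nhds 0)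
    (hX : ContDiffOn ℝ 1 X U) (hX0 : X 0 = 0) {κ ω η : ℝ} (hκ : κ * κ = 1) (hω : 0 < ω)
    (hd : 4 * ω ^ 2 = 4 * detJ X - trJ X ^ 2) (hn : κ * jac21 X / ω ≠ 0) (hη : 0 < η) :
    ∃ U F S R, U ∈ nhds (0 : ℝ × ℝ) ∧
      HalfData X (chart κ (κ * (jac11 X - jac22 X) / (2 * ω)) (κ * jac21 X / ω) hκ hn) U F S ∧
      FlowData S R ∧ (∀ s, S 0 s = s) ∧ (∀ θ, StrictMono (S θ)) ∧
      ∀ σ, |S Real.pi σ - σ - Real.pi * (trJ X / 2 / ω)| ≤ Real.pi * η := by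
  have h1 : HasStrictFDerivAt X (fderiv ℝ X 0) 0 :=
    (hX.contDiffAt hU).hasStrictFDerivAt (by simp)
  obtain ⟨V, F, S, R, B, a1, a2, a3, a4, a5, a6, a7, a8, a9, a10⟩ :=
    half_exists hω hη hX0 h1 (chart_conj X hκ hω hd hn)
  exact ⟨V, F, S, R, a1, a2, ⟨a4, a5, a6, a7, B, a9⟩, a3, a8, a10⟩

lemma sign_mul_facts {c d : ℝ} (h : c * d > 0) :
    ∃ κ : ℝ, κ * κ = 1 ∧ 0 < κ * c ∧ 0 < κ * d := by
  rcases pos_and_pos_or_neg_and_neg_of_mul_pos h with ⟨h1, h2⟩ | ⟨h1, h2⟩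
  · exact ⟨1, by norm_num, by linarith, by linarith⟩
  · exact ⟨-1, by norm_num, by linarith, by linarith⟩

/-- Half return maps as order isomorphisms. -/
lemma exists_iso {S R : ℝ → ℝ → ℝ} (D : FlowData S R) (hS : ∀ θ, StrictMono (S θ)) (θ : ℝ) :
    ∃ P : ℝ ≃o ℝ, (∀ s, P s = S θ s) ∧ ∀ s, P.symm s = R θ s := by
  refine ⟨StrictMono.orderIsoOfRightInverse (S θ) (hS θ) (R θ) (D.SR θ), fun s => rfl,
    fun s => rfl⟩

lemma exists_matching {S₁ R₁ S₂ R₂ : ℝ → ℝ → ℝ} {μ₁ μ₂ α : ℝ} (f₁ : FlowData S₁ R₁)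
    (f₂ : FlowData S₂ R₂) (z₁ : ∀ s, S₁ 0 s = s) (z₂ : ∀ s, S₂ 0 s = s)
    (m₁ : ∀ θ, StrictMono (S₁ θ)) (m₂ : ∀ θ, StrictMono (S₂ θ)) (hl : μ₁ + μ₂ ≠ 0)
    (hα : α = Real.sign (μ₁ + μ₂))
    (d₁ : ∀ σ, |S₁ Real.pi σ - σ - Real.pi * μ₁| ≤ Real.pi * (|μ₁ + μ₂| / 4))
    (d₂ : ∀ σ, |S₂ Real.pi σ - σ - Real.pi * μ₂| ≤ Real.pi * (|μ₁ + μ₂| / 4)) :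
    ∃ h₁ h₂ : ℝ ≃o ℝ, Matching (kf α R₁ h₁) (kf α R₂ h₂) := by
  obtain ⟨P₁, hP₁, hP₁'⟩ := exists_iso f₁ m₁ Real.pi
  obtain ⟨P₂, hP₂, hP₂'⟩ := exists_iso f₂ m₂ Real.pi
  have hpi := Real.pi_pos
  have hc : 0 < Real.pi * (|μ₁ + μ₂| / 2) := by
    have := abs_pos.2 hl
    positivity
  obtain ⟨h, hh⟩ := exists_conj_translation (P₁.trans P₂) (α := α) hc (by
    have key : ∀ s, |(P₁.trans P₂) s - s - Real.pi * (μ₁ + μ₂)| ≤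
        Real.pi * (|μ₁ + μ₂| / 2) := fun s => by
      have e1 := abs_le.1 (d₁ s)
      have e2 := abs_le.1 (d₂ (S₁ Real.pi s))
      rw [OrderIso.trans_apply, hP₁, hP₂, abs_le]
      constructor <;> linarith
    rcases lt_or_gt_of_ne hl with hneg | hpos
    · right
      refine ⟨by rw [hα, Real.sign_of_neg hneg], fun s => ?_⟩
      have e := (abs_le.1 (key s)).2
      rw [abs_of_neg hneg] at e ⊢
      linarith
    · left
      refine ⟨by rw [hα, Real.sign_of_pos hpos], fun s => ?_⟩
      have e := (abs_le.1 (key s)).1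
      rw [abs_of_pos hpos] at e ⊢
      linarith)
  have r₁ : ∀ s, R₁ 0 s = s := fun s => by rw [← z₁ (R₁ 0 s), f₁.SR]
  have r₂ : ∀ s, R₂ 0 s = s := fun s => by rw [← z₂ (R₂ 0 s), f₂.SR]
  refine ⟨h, (P₁.symm.trans h).trans (OrderIso.addRight (α * Real.pi)), fun s => ?_, fun s => ?_⟩
  · simp only [kf, OrderIso.trans_apply, OrderIso.addRight_apply, r₁]
    rw [← hP₂']
    have := hh (P₁.symm (P₂.symm s))
    simp only [OrderIso.trans_apply, OrderIso.apply_symm_apply] at this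
    rw [this]; ring
  · simp only [kf, OrderIso.trans_apply, OrderIso.addRight_apply, r₂, hP₁']
    ring

/-- Focus-focus case: a vector field in Ω₁ whose four eigenvalues are all non-real is
locally Σ-equivalent near the origin to
`Z_ff = ((αx − y, x + αy), (αx − y, x + αy))` with `α = sign ℓ`. -/
theorem stmt1 (U : Set (ℝ × ℝ)) (X Y : ℝ × ℝ → ℝ × ℝ) (α : ℝ)
    (hZ : InOmega1 U X Y)
    (hff : (eig1 X).im ≠ 0 ∧ (eig2 X).im ≠ 0 ∧ (eig1 Y).im ≠ 0 ∧ (eig2 Y).im ≠ 0)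
    (hα : α = Real.sign (ellVal X Y)) :
    LocalSigmaEquiv X Y
      (fun p : ℝ × ℝ => (α * p.1 - p.2, p.1 + α * p.2))
      (fun p : ℝ × ℝ => (α * p.1 - p.2, p.1 + α * p.2)) := by
  obtain ⟨⟨hUo, hU0, hX, hY, hX0, hY0, -, hjac⟩, -, -, hell⟩ := hZ
  obtain ⟨hx, -, hy, -⟩ := hff
  obtain ⟨rx, ix, dx⟩ := eig_facts X hx
  obtain ⟨ry, iy, dy⟩ := eig_facts Y hy
  have hU : U ∈ nhds (0 : ℝ × ℝ) := hUo.mem_nhds hU0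
  have hl : ellVal X Y = trJ X / 2 / (eig1 X).im + trJ Y / 2 / (eig1 Y).im := by
    unfold ellVal
    rw [if_pos (mul_ne_zero hx hy), abs_of_pos ix, abs_of_pos iy, rx, ry]
  rw [hl] at hell hα
  generalize (eig1 X).im = ω₁ at *
  generalize (eig1 Y).im = ω₂ at *
  obtain ⟨κ, hκ, hc, hd⟩ := sign_mul_facts hjac
  have hκ' : (-κ) * (-κ) = 1 := by linarith
  have n₁ : 0 < κ * jac21 X / ω₁ := div_pos hc ix
  have n₂ : (-κ) * jac21 Y / ω₂ < 0 := div_neg_of_neg_of_pos (by linarith) iy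
  have hη : 0 < |trJ X / 2 / ω₁ + trJ Y / 2 / ω₂| / 4 := by
    have := abs_pos.2 hell
    positivity
  obtain ⟨U₁, F₁, S₁, R₁, u₁, D₁, f₁, z₁, m₁, d₁⟩ :=
    exists_half hU hX hX0 hκ ix dx n₁.ne' hη
  obtain ⟨U₂, F₂, S₂, R₂, u₂, D₂, f₂, z₂, m₂, d₂⟩ :=
    exists_half hU hY hY0 hκ' iy dy n₂.ne hη
  obtain ⟨h₁, h₂, hm⟩ := exists_matching f₁ f₂ z₁ z₂ m₁ m₂ hell hα d₁ d₂
  have hα1 : |α| ≤ 1 := by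
    rcases Real.sign_apply_eq (trJ X / 2 / ω₁ + trJ Y / 2 / ω₂) with h | h | h <;>
      rw [hα, h] <;> norm_num
  have hB := charts_mk (κ := 1) (m := 0) (n := 1) (m' := 0) (n' := -1) (by norm_num) (by norm_num)
    (by norm_num) (by norm_num)
  refine glue_final (charts_mk hκ hκ' n₁ n₂) hB hα1 u₁ u₂ D₁ D₂
    (lin_half α _ fun z => ?_) (lin_half α _ fun z => ?_) f₁ f₂ h₁ h₂ hm
  · rw [chart_apply, chart_apply]
    ext <;> simp [linF] <;> ring
  · rw [chart_apply, chart_apply]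
    ext <;> simp [linF] <;> ring
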